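/- arXiv:1407.4637 — 3 statements merged into one kernel-verified Lean document; each statement's English description precedes it below -/
import Mathlib

section
/- Let I be a countably infinite set and let (T_n)_{n∈ℕ} be a sequence of weighted pseudo-shifts on c₀(I), where T_n[(x_i)_{i∈I}] = (b_i^n x_{φ_n(i)})_{i∈I}, each b_i^n is a positive real number and each φ_n : I → I is injective. Assume: (i) (φ_n)_n is a run-away sequence, i.e. for any finite subsets I₀, J₀ ⊆ I there exists n₀ ∈ ℕ such that φ_n(J₀) ∩ I₀ = ∅ for every n ≥ n₀; (ii) there exists ρ > 1 such that 1/ρ^{|n-m|} ≤ b_s^n / b_t^m for all n, m ∈ ℕ and s, t ∈ I with φ_n(s) = φ_m(t); (iii) there exists g : I → ℝ such that |n-m| ≤ |g(s)-g(t)| for all n, m ∈ ℕ and s, t ∈ I with φ_n(s) = φ_m(t); (iv) (W_p)_{p∈ℕ} is an increasing sequence of finite subsets of I with I = ⋃_{p=1}^∞ W_p. Then (T_n)_{n∈ℕ} is frequently universal on c₀(I) if and only if there exist a sequence (M(p))_{p∈ℕ} of positive real numbers tending to ∞ and a sequence (E_p)_{p∈ℕ} of subsets of ℕ such that: (a) for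 any p ≥ 1, ldens(E_p) > 0; (b) for any distinct p, q ≥ 1, n ∈ E_p and m ∈ E_q, φ_n(W_p) ∩ φ_m(W_q) = ∅; (c) for every p ≥ 1 and every s ∈ W_p, lim_{n→∞, n∈E_p} b_s^n = ∞; (d) for any p, q ≥ 1, n ∈ E_p, m ∈ E_q with n ≠ m, t ∈ W_q and s ∈ I with φ_n(s) = φ_m(t), one has b_s^n / b_t^m ≤ 1/(M(p)M(q)). Moreover, these conditions hold for some sequence (M(p))_{p∈ℕ} tending to ∞ if and only if for every sequence (M(p))_{p∈ℕ} of positive reals tending to ∞ there exists a sequence (E_p)_{p∈ℕ} satisfying (a)–(d). -/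
/-!
Below, (a)–(d) are the four clauses of `Cond0`. The three assertions are proved equivalent through the cycle
"(a)–(d) for some `M`" ⟹ frequent universality ⟹ "(a)–(d) for every `M`".

*From universality to (a)–(d).* Let `x` be a frequently universal vector. Fix target values
`D (p, s)`, and let `E p` be the set of times `n` at which `T_n x` is within
`min 1 (1 / M p)` of the vector equal to `D (p, s)` at each `s ∈ W p` and to `0` elsewhere.
If `φ_n s = φ_m t` with `n ∈ E p`, `m ∈ E q`, `s ∈ W p`, `t ∈ W q`, then `b_s^n / b_t^m` is
roughly `D (p, s) / D (q, t)`, whereas the hypotheses `hratio` and `hg` confine it to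
`[r ^ (-|g s - g t|), r ^ |g s - g t|]`. If the values `D` grow fast enough along an enumeration
of `ℕ × I`, this forces `(p, s) = (q, t)` (`not_comparable`), and then `n = m` by `hg`. This
gives (b) and the main case of (d); the case `s ∉ W p` of (d) is a comparison of sizes. Condition
(c) holds because `x (φ_n s) → 0` by the run-away property.

*From (a)–(d) to universality.* Let `y p` run through the finitely supported rational vectors,
each repeated infinitely often, and keep only those `p` for which `y p` is supported in `W p` and
bounded by `M p > 1`. Put
`x = ∑_p ∑_{n ∈ A p} ∑_{s ∈ W p} (y_s / b_s^n) e_{φ_n s}`, where `A p` is a tail of `E p`. By (b)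
and (d) the positions `φ_n s` are distinct, by (c) `x ∈ c₀`, and by (d) `‖T_n x - y p‖ ≤ 1 / M p`
for `n ∈ A p`.
-/

open Filter

/-- The lower density of a set `A ⊆ ℕ`. -/
noncomputable def ldens (A : Set ℕ) : ℝ :=
  atTop.liminf fun N : ℕ => ((A ∩ Set.Iic N).ncard : ℝ) / (N : ℝ)

/-- Membership in `c₀(I)`: for every `ε > 0` only finitely many coordinates have
absolute value `≥ ε`. -/
def Memc0 {I : Type*} (x : I → ℝ) : Prop := ∀ ε : ℝ, 0 < ε → {i : I | ε ≤ |x i|}.Finite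

/-- A sequence of positive real numbers tending to `∞`. -/
def GoodM (M : ℕ → ℝ) : Prop := (∀ p, 0 < M p) ∧ Tendsto M atTop atTop

/-- Frequent universality of the sequence of weighted pseudo-shifts
`T_n x = (b_i^n x_{φ_n(i)})_i` on `c₀(I)`: there is `x ∈ c₀(I)` such that for every
`y ∈ c₀(I)` and `ε > 0`, the set `{n : ‖T_n x - y‖ ≤ ε}` has positive lower density. -/
def FreqUniversal {I : Type*} (b : ℕ → I → ℝ) (φ : ℕ → I → I) : Prop :=
  ∃ x : I → ℝ, Memc0 x ∧ ∀ y : I → ℝ, Memc0 y → ∀ ε : ℝ, 0 < ε →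
    0 < ldens {n : ℕ | ∀ i : I, |b n i * x (φ n i) - y i| ≤ ε}

/-- Conditions (a)–(d) of STATEMENT 0. -/
def Cond0 {I : Type*} (b : ℕ → I → ℝ) (φ : ℕ → I → I) (W : ℕ → Set I)
    (M : ℕ → ℝ) (E : ℕ → Set ℕ) : Prop :=
  (∀ p : ℕ, 1 ≤ p → 0 < ldens (E p)) ∧
  (∀ p q : ℕ, 1 ≤ p → 1 ≤ q → p ≠ q → ∀ n ∈ E p, ∀ m ∈ E q,
      ∀ s ∈ W p, ∀ t ∈ W q, φ n s ≠ φ m t) ∧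
  (∀ p : ℕ, 1 ≤ p → ∀ s ∈ W p,
      Tendsto (fun n : ℕ => b n s) (atTop ⊓ Filter.principal (E p)) atTop) ∧
  (∀ p q : ℕ, 1 ≤ p → 1 ≤ q → ∀ n ∈ E p, ∀ m ∈ E q, n ≠ m → ∀ t ∈ W q, ∀ s : I,
      φ n s = φ m t → b n s / b m t ≤ 1 / (M p * M q))

/-! ### Lower density -/

lemma ncard_inter_Iic_le (A : Set ℕ) (N : ℕ) : (A ∩ Set.Iic N).ncard ≤ N + 1 := by
  calc (A ∩ Set.Iic N).ncard ≤ (Set.Iic N).ncard :=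
        Set.ncard_le_ncard Set.inter_subset_right (Set.finite_Iic N)
    _ = N + 1 := by
        rw [← Finset.coe_Iic, Set.ncard_coe_finset]; simp

lemma density_ratio_le_two (A : Set ℕ) (N : ℕ) :
    ((A ∩ Set.Iic N).ncard : ℝ) / (N : ℝ) ≤ 2 := by
  rcases Nat.eq_zero_or_pos N with rfl | hN
  · simp
  · have h1 : ((A ∩ Set.Iic N).ncard : ℝ) ≤ N + 1 := by exact_mod_cast ncard_inter_Iic_le A N
    have h2 : (1 : ℝ) ≤ N := by exact_mod_cast hN
    rw [div_le_iff₀ (by linarith)]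
    linarith

/-- Positivity of the lower density is insensitive to the removal of finitely many elements. -/
lemma ldens_pos_of_subset {A B : Set ℕ} {K : ℕ} (h : A ⊆ B ∪ Set.Iio K) (hA : 0 < ldens A) :
    0 < ldens B := by
  unfold ldens at *
  obtain ⟨c, hc0, hc⟩ := exists_between hA
  have h1 := eventually_lt_of_lt_liminf hc
    (isBoundedUnder_of ⟨0, fun N => by positivity⟩)
  have h2 : ∀ᶠ N : ℕ in atTop, (K : ℝ) / N < c / 2 :=
    (tendsto_const_div_atTop_nhds_zero_nat (K : ℝ)).eventually_lt_const (by linarith)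
  refine lt_of_lt_of_le (half_pos hc0) ?_
  refine le_liminf_of_le
    (IsBoundedUnder.isCoboundedUnder_ge (isBoundedUnder_of ⟨2, density_ratio_le_two B⟩)) ?_
  filter_upwards [h1, h2] with N h1 h2
  have h3 : (A ∩ Set.Iic N).ncard ≤ (B ∩ Set.Iic N).ncard + K := by
    have hsub : A ∩ Set.Iic N ⊆ (B ∩ Set.Iic N) ∪ Set.Iio K := by
      rintro n ⟨hn, hnN⟩
      rcases h hn with h' | h'
      · exact Or.inl ⟨h', hnN⟩
      · exact Or.inr h'
    calc _ ≤ ((B ∩ Set.Iic N) ∪ Set.Iio K).ncard :=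
          Set.ncard_le_ncard hsub
            (((Set.finite_Iic N).subset Set.inter_subset_right).union (Set.finite_Iio K))
      _ ≤ _ := Set.ncard_union_le _ _
      _ = _ := by
          congr 1
          rw [← Finset.coe_Iio, Set.ncard_coe_finset]; simp
  have h4 : ((A ∩ Set.Iic N).ncard : ℝ) ≤ (B ∩ Set.Iic N).ncard + K := by exact_mod_cast h3
  have h5 : ((A ∩ Set.Iic N).ncard : ℝ) / N ≤ ((B ∩ Set.Iic N).ncard : ℝ) / N + K / N := by
    rw [← add_div]
    gcongr
  linarith

/-! ### Lacunary target values -/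

/-- A sequence growing faster than any prescribed comparison with its earlier terms. -/
lemma exists_fast_seq (L : ℕ → ℝ) (F : ℕ → ℕ → ℝ) (hF : ∀ j k, 0 ≤ F j k) :
    ∃ D : ℕ → ℝ, (∀ k, L k ≤ D k ∧ 2 ≤ D k) ∧ ∀ j k, j < k → F j k * (D j + 1) < D k - 1 := by
  let D : ℕ → ℝ := fun k => Nat.strongRec (motive := fun _ => ℝ)
    (fun k D => |L k| + 2 + ∑ j : Fin k, F j k * |D j j.2 + 1|) k
  have hD : ∀ k, D k = |L k| + 2 + ∑ j : Fin k, F j k * |D j + 1| := fun k => by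
    simp only [D]
    rw [Nat.strongRec_eq]
  have hnn : ∀ k, ∀ j : Fin k, 0 ≤ F j k * |D j + 1| := fun k j =>
    mul_nonneg (hF _ _) (abs_nonneg _)
  refine ⟨D, fun k => ?_, fun j k hjk => ?_⟩
  · have := Finset.sum_nonneg (s := Finset.univ) fun j _ => hnn k j
    rw [hD k]
    exact ⟨by linarith [le_abs_self (L k)], by linarith [abs_nonneg (L k)]⟩
  · have h1 := Finset.single_le_sum (s := Finset.univ) (fun j _ => hnn k j)
      (Finset.mem_univ ⟨j, hjk⟩)
    have h2 : F j k * (D j + 1) ≤ F j k * |D j + 1| :=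
      mul_le_mul_of_nonneg_left (le_abs_self _) (hF _ _)
    simp only at h1
    rw [hD k]
    linarith [abs_nonneg (L k)]

lemma abs_mul_bounds {β z D e : ℝ} (h : |β * z - D| ≤ e) (hβ : 0 < β) (hD : e ≤ D) :
    D - e ≤ β * |z| ∧ β * |z| ≤ D + e := by
  have h1 : β * |z| = |β * z| := by rw [abs_mul, abs_of_pos hβ]
  rw [h1]
  obtain ⟨h2, h3⟩ := abs_le.1 h
  rw [abs_of_nonneg (show 0 ≤ β * z by linarith)]
  exact ⟨by linarith, by linarith⟩

/-- Two weights whose ratio is at most `R` cannot send the same coordinate close to two values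
whose ratio exceeds `R`. -/
lemma not_comparable {β β' z D D' R : ℝ} (hβ : 0 < β) (hβ' : 0 < β') (hD : 1 ≤ D)
    (hD' : 1 ≤ D') (h : |β * z - D| ≤ 1) (h' : |β' * z - D'| ≤ 1)
    (hR : β' / β ≤ R) (hDD : R * (D + 1) < D' - 1) : False := by
  have h1 := (abs_mul_bounds h hβ hD).2
  have h2 := (abs_mul_bounds h' hβ' hD').1
  have hR0 : 0 ≤ R := le_trans (by positivity) hR
  have h3 : β' ≤ R * β := (div_le_iff₀ hβ).1 hR
  have h4 : β' * |z| ≤ R * (β * |z|) := by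
    rw [← mul_assoc]
    exact mul_le_mul_of_nonneg_right h3 (abs_nonneg _)
  have h5 : R * (β * |z|) ≤ R * (D + 1) := mul_le_mul_of_nonneg_left h1 hR0
  linarith

lemma weight_ratio_le {I : Type*} {b : ℕ → I → ℝ}
    {φ : ℕ → I → I} {r : ℝ} (hr : 1 < r)
    (hratio : ∀ n m : ℕ, ∀ s t : I, φ n s = φ m t →
      1 / r ^ ((n : ℤ) - (m : ℤ)).natAbs ≤ b n s / b m t)
    {g : I → ℝ} (hg : ∀ n m : ℕ, ∀ s t : I, φ n s = φ m t →
      ((((n : ℤ) - (m : ℤ)).natAbs : ℝ)) ≤ |g s - g t|)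
    {n m : ℕ} {s t : I} (h : φ n s = φ m t) : b m t / b n s ≤ r ^ |g s - g t| := by
  have h1 := hratio n m s t h
  have h2 : b m t / b n s ≤ r ^ ((n : ℤ) - (m : ℤ)).natAbs := by
    have := one_div_le_one_div_of_le (by positivity) h1
    rwa [one_div_div, one_div_one_div] at this
  refine h2.trans ?_
  rw [← Real.rpow_natCast]
  exact Real.rpow_le_rpow_of_exponent_le hr.le (hg n m s t h)

/-! ### From frequent universality to the sets `E p` -/

/-- Universality yields (a)–(d) for an arbitrary positive `M`. -/
lemma cond_of_freqUniversal {I : Type*} [Countable I]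
    (b : ℕ → I → ℝ) (hbpos : ∀ n i, 0 < b n i)
    (φ : ℕ → I → I)
    (hrunaway : ∀ I₀ J₀ : Set I, I₀.Finite → J₀.Finite →
      ∃ n₀ : ℕ, ∀ n ≥ n₀, ∀ j ∈ J₀, φ n j ∉ I₀)
    (hratio : ∃ r : ℝ, 1 < r ∧ ∀ n m : ℕ, ∀ s t : I, φ n s = φ m t →
      1 / r ^ ((n : ℤ) - (m : ℤ)).natAbs ≤ b n s / b m t)
    (hg : ∃ g : I → ℝ, ∀ n m : ℕ, ∀ s t : I, φ n s = φ m t →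
      ((((n : ℤ) - (m : ℤ)).natAbs : ℝ)) ≤ |g s - g t|)
    (W : ℕ → Set I) (hWfin : ∀ p, (W p).Finite)
    (hFU : FreqUniversal b φ) (M : ℕ → ℝ) (hMpos : ∀ p, 0 < M p) :
    ∃ E : ℕ → Set ℕ, Cond0 b φ W M E := by
  classical
  obtain ⟨r, hr, hratio⟩ := hratio
  obtain ⟨g, hg⟩ := hg
  obtain ⟨x, hx, hxu⟩ := hFU
  obtain ⟨code, hcode⟩ := exists_injective_nat (ℕ × I)
  -- `D (code (p, s))` is the value prescribed at `s` by the `p`-th target.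
  obtain ⟨D, hDL, hDF⟩ : ∃ D : ℕ → ℝ,
      (∀ u : ℕ × I, M u.1 + 1 ≤ D (code u) ∧ 2 ≤ D (code u)) ∧
      ∀ u v : ℕ × I, code u < code v →
        r ^ |g u.2 - g v.2| * (D (code u) + 1) < D (code v) - 1 := by
    rcases isEmpty_or_nonempty I with hI | hI
    · exact ⟨fun _ => 0, fun u => (hI.false u.2).elim, fun u => (hI.false u.2).elim⟩
    let dec : ℕ → ℕ × I := Function.invFun code
    have hdec : ∀ u, dec (code u) = u := Function.leftInverse_invFun hcode
    obtain ⟨D, h1, h2⟩ := exists_fast_seq (fun k => M (dec k).1 + 1)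
      (fun j k => r ^ |g (dec j).2 - g (dec k).2|) (fun j k => by positivity)
    refine ⟨D, fun u => ?_, fun u v huv => ?_⟩
    · simpa [hdec] using h1 (code u)
    · simpa [hdec] using h2 _ _ huv
  let y : ℕ → I → ℝ := fun p s => if s ∈ W p then D (code (p, s)) else 0
  have hy : ∀ p, Memc0 (y p) := by
    intro p ε hε
    refine (hWfin p).subset fun s hs => ?_
    by_contra hsW
    simp only [Set.mem_ofPred_eq, y, if_neg hsW, abs_zero] at hs
    linarith
  let e : ℕ → ℝ := fun p => min 1 (1 / M p)
  have he : ∀ p, 0 < e p := fun p => lt_min one_pos (by have := hMpos p; positivity)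
  have he1 : ∀ p, e p ≤ 1 := fun p => min_le_left _ _
  let E : ℕ → Set ℕ := fun p => {n : ℕ | ∀ i : I, |b n i * x (φ n i) - y p i| ≤ e p}
  have hin : ∀ p, ∀ n ∈ E p, ∀ s ∈ W p, |b n s * x (φ n s) - D (code (p, s))| ≤ e p := by
    intro p n hn s hs
    simpa only [y, if_pos hs] using hn s
  have key : ∀ p q n m s t, n ∈ E p → m ∈ E q → s ∈ W p → t ∈ W q → φ n s = φ m t →
      (p, s) = (q, t) := by
    intro p q n m s t hn hm hs ht h
    have h1 := (hin p n hn s hs).trans (he1 p)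
    have h2 := (hin q m hm t ht).trans (he1 q)
    have h3 := (hDL (p, s)).2
    have h4 := (hDL (q, t)).2
    by_contra hne
    rcases lt_or_gt_of_ne (fun h => hne (hcode h)) with hlt | hlt
    · rw [← h] at h2
      exact not_comparable (hbpos n s) (hbpos m t) (by linarith) (by linarith) h1 h2
        (weight_ratio_le hr hratio hg h) (hDF _ _ hlt)
    · rw [h] at h1
      exact not_comparable (hbpos m t) (hbpos n s) (by linarith) (by linarith) h2 h1
        (weight_ratio_le hr hratio hg h.symm) (hDF _ _ hlt)
  refine ⟨E, fun p _ => hxu _ (hy p) _ (he p), ?_, ?_, ?_⟩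
  · intro p q _ _ hpq n hn m hm s hs t ht h
    exact hpq (congrArg Prod.fst (key p q n m s t hn hm hs ht h))
  · intro p _ s hs
    rw [tendsto_atTop]
    intro K
    have hδ : (0 : ℝ) < 1 / (|K| + 1) := by positivity
    obtain ⟨n₀, hn₀⟩ := hrunaway _ {s} (hx _ hδ) (Set.finite_singleton s)
    rw [eventually_inf_principal]
    filter_upwards [eventually_ge_atTop n₀] with n hn hnE
    have h1 := hn₀ n hn s rfl
    simp only [Set.mem_ofPred_eq, not_le] at h1
    have h2 := (hDL (p, s)).2
    have h3 := (abs_mul_bounds ((hin p n hnE s hs).trans (he1 p)) (hbpos n s) (by linarith)).1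
    have h4 : b n s * |x (φ n s)| ≤ b n s * (1 / (|K| + 1)) :=
      mul_le_mul_of_nonneg_left h1.le (hbpos n s).le
    have h5 : 1 ≤ b n s / (|K| + 1) := by
      rw [mul_one_div] at h4
      linarith
    rw [le_div_iff₀ (by positivity)] at h5
    linarith [le_abs_self K]
  · intro p q _ _ n hn m hm hnm t ht s h
    have hs : s ∉ W p := by
      intro hs
      have hst : s = t := congrArg Prod.snd (key p q n m s t hn hm hs ht h)
      have h1 := hg n m s t h
      rw [hst, sub_self, abs_zero] at h1
      have h2 : ((n : ℤ) - (m : ℤ)).natAbs ≤ 0 := by exact_mod_cast h1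
      omega
    have h1 : |b n s * x (φ n s)| ≤ e p := by
      simpa only [y, if_neg hs, sub_zero] using hn s
    rw [abs_mul, abs_of_pos (hbpos n s), h] at h1
    have h2 := hDL (q, t)
    have h3 := (abs_mul_bounds (hin q m hm t ht) (hbpos m t) (by linarith [he1 q])).1
    have h4 : M q ≤ b m t * |x (φ m t)| := by linarith [he1 q]
    have h5 : b n s * |x (φ m t)| ≤ 1 / M p := h1.trans (min_le_right _ _)
    have hz : 0 < |x (φ m t)| := by
      refine (pos_iff_pos_of_mul_pos ?_).1 (hbpos m t)
      exact (hMpos q).trans_le h4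
    calc b n s / b m t = (b n s * |x (φ m t)|) / (b m t * |x (φ m t)|) :=
          (mul_div_mul_right _ _ hz.ne').symm
      _ ≤ (1 / M p) / M q := by
          have := hMpos p
          exact div_le_div₀ (by positivity) h5 (hMpos q) h4
      _ = 1 / (M p * M q) := by rw [div_div]

/-! ### Construction of a frequently universal vector -/

/-- Finitely supported rational vectors are dense in `c₀(I)`. -/
lemma exists_finsupp_close {I : Type*} {y : I → ℝ} (hy : Memc0 y) {ε : ℝ} (hε : 0 < ε) :
    ∃ v : I →₀ ℚ, ∀ i, |(v i : ℝ) - y i| ≤ ε := by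
  classical
  have hq : ∀ i, ∃ q : ℚ, |(q : ℝ) - y i| ≤ ε := by
    intro i
    obtain ⟨q, h1, h2⟩ := exists_rat_btwn (show y i < y i + ε by linarith)
    exact ⟨q, abs_le.2 ⟨by linarith, by linarith⟩⟩
  choose q hq using hq
  refine ⟨Finsupp.onFinset (hy ε hε).toFinset (fun i => if ε ≤ |y i| then q i else 0) ?_,
    fun i => ?_⟩
  · intro i hi
    by_contra h
    simp only [Set.Finite.mem_toFinset, Set.mem_ofPred_eq] at h
    simp [h] at hi
  · rw [Finsupp.onFinset_apply]
    split_ifs with h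
    · exact hq i
    · simpa using (not_le.1 h).le

/-- A single vector approximating every target `y p` at the times `n ∈ A p`. The sets `A p` need
not have positive density and may be empty, so that unwanted `p` are discarded. -/
lemma exists_vector {I : Type*}
    (b : ℕ → I → ℝ) (hbpos : ∀ n i, 0 < b n i)
    (φ : ℕ → I → I) (hφinj : ∀ n, Function.Injective (φ n))
    (W : ℕ → Set I) (hWfin : ∀ p, (W p).Finite) (hWmono : Monotone W)
    (M : ℕ → ℝ) (A : ℕ → Set ℕ) (y : ℕ → I → ℝ)
    (hM : ∀ p, (A p).Nonempty → 1 < M p)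
    (hWne : ∀ p, (A p).Nonempty → (W p).Nonempty)
    (hyW : ∀ p, (A p).Nonempty → ∀ s ∉ W p, y p s = 0)
    (hyM : ∀ p, (A p).Nonempty → ∀ s, |y p s| ≤ M p)
    (hyb : ∀ p, ∀ n ∈ A p, ∀ s ∈ W p, |y p s| * (p + 1) ≤ b n s)
    (hb : ∀ p q : ℕ, p ≠ q → ∀ n ∈ A p, ∀ m ∈ A q, ∀ s ∈ W p, ∀ t ∈ W q, φ n s ≠ φ m t)
    (hc : ∀ p, (A p).Nonempty → ∀ s ∈ W p,
      Tendsto (fun n : ℕ => b n s) (atTop ⊓ Filter.principal (A p)) atTop)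
    (hd : ∀ p q : ℕ, ∀ n ∈ A p, ∀ m ∈ A q, n ≠ m → ∀ t ∈ W q, ∀ s : I,
      φ n s = φ m t → b n s / b m t ≤ 1 / (M p * M q)) :
    ∃ x : I → ℝ, Memc0 x ∧ ∀ p, ∀ n ∈ A p, ∀ i, |b n i * x (φ n i) - y p i| ≤ 1 / M p := by
  classical
  let P : ℕ × ℕ × I → I → Prop := fun u i => u.2.1 ∈ A u.1 ∧ u.2.2 ∈ W u.1 ∧ φ u.2.1 u.2.2 = i
  have huniq : ∀ p q n m s t, n ∈ A p → m ∈ A q → s ∈ W p → t ∈ W q → φ n s = φ m t →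
      p = q ∧ n = m ∧ s = t := by
    intro p q n m s t hn hm hs ht h
    have hpq : p = q := by
      by_contra hpq
      exact hb p q hpq n hn m hm s hs t ht h
    subst hpq
    have hnm : n = m := by
      by_contra hnm
      have h1 := hd p p n hn m hm hnm t ht s h
      have h2 := hd p p m hm n hn (Ne.symm hnm) s hs t h.symm
      have h3 := hM p ⟨n, hn⟩
      have h4 : 1 / (M p * M p) < 1 := by
        rw [div_lt_one (by positivity)]
        nlinarith
      -- Both `b n s / b m t` and its inverse would be smaller than `1`.
      have h5 := (div_lt_one (hbpos m t)).1 (h1.trans_lt h4)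
      have h6 := (div_lt_one (hbpos n s)).1 (h2.trans_lt h4)
      linarith
    subst hnm
    exact ⟨rfl, rfl, hφinj n h⟩
  let x : I → ℝ := fun i => if h : ∃ u, P u i then
    y h.choose.1 h.choose.2.2 / b h.choose.2.1 h.choose.2.2 else 0
  have hx0 : ∀ i, (¬ ∃ u, P u i) → x i = 0 := fun i h => dif_neg h
  have hxv : ∀ p n s, n ∈ A p → s ∈ W p → x (φ n s) = y p s / b n s := by
    intro p n s hn hs
    have h : ∃ u, P u (φ n s) := ⟨(p, n, s), hn, hs, rfl⟩
    have hu := h.choose_spec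
    have hx : x (φ n s) = y h.choose.1 h.choose.2.2 / b h.choose.2.1 h.choose.2.2 := dif_pos h
    obtain ⟨h1, h2, h3⟩ := huniq _ _ _ _ _ _ hu.1 hn hu.2.1 hs hu.2.2
    rw [hx, h1, h2, h3]
  refine ⟨x, ?_, ?_⟩
  · intro ε hε
    have hfin : ∀ p, {n | n ∈ A p ∧ ∃ s ∈ W p, ε * b n s ≤ |y p s|}.Finite := by
      intro p
      have hs : ∀ s ∈ W p, {n | n ∈ A p ∧ ε * b n s ≤ |y p s|}.Finite := by
        intro s hs
        by_cases hne : (A p).Nonempty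
        · have h1 := (hc p hne s hs).eventually_gt_atTop (|y p s| / ε)
          rw [eventually_inf_principal, eventually_atTop] at h1
          obtain ⟨N, hN⟩ := h1
          refine (Set.finite_Iio N).subset ?_
          rintro n ⟨hn, hle⟩
          by_contra hnN
          have := hN n (not_lt.1 hnN) hn
          rw [div_lt_iff₀ hε] at this
          linarith
        · rw [Set.not_nonempty_iff_eq_empty] at hne
          simp [hne]
      refine ((hWfin p).biUnion hs).subset ?_
      rintro n ⟨hn, s, hsW, hle⟩
      exact Set.mem_biUnion hsW ⟨hn, hle⟩
    obtain ⟨Q, hQ⟩ := exists_nat_gt (1 / ε)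
    refine (Set.Finite.biUnion (Set.finite_Iio Q) fun p _ =>
      Set.Finite.biUnion (hfin p) fun n _ => (hWfin p).image (φ n)).subset ?_
    intro i hi
    have hi : ε ≤ |x i| := hi
    have h : ∃ u, P u i := by
      by_contra h
      rw [hx0 i h, abs_zero] at hi
      linarith
    obtain ⟨⟨p, n, s⟩, hn, hs, rfl⟩ := h
    simp only at hn hs hi ⊢
    rw [hxv p n s hn hs, abs_div, abs_of_pos (hbpos n s), le_div_iff₀ (hbpos n s)] at hi
    refine Set.mem_biUnion (show p ∈ Set.Iio Q from ?_)
      (Set.mem_biUnion ⟨hn, s, hs, hi⟩ ⟨s, hs, rfl⟩)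
    by_contra hpQ
    have h1 := hyb p n hn s hs
    have h2 : (Q : ℝ) ≤ p := by exact_mod_cast not_lt.1 hpQ
    have h3 := hbpos n s
    have h4 : ε * (p + 1) > 1 := by
      rw [div_lt_iff₀ hε] at hQ
      nlinarith
    nlinarith [mul_le_mul_of_nonneg_right hi (show (0 : ℝ) ≤ p + 1 by positivity)]
  · intro p n hn i
    have hMp := hM p ⟨n, hn⟩
    by_cases hi : i ∈ W p
    · rw [hxv p n i hn hi, mul_div_cancel₀ _ (hbpos n i).ne', sub_self, abs_zero]
      positivity
    rw [hyW p ⟨n, hn⟩ i hi, sub_zero]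
    by_cases h : ∃ u, P u (φ n i)
    · obtain ⟨⟨q, m, t⟩, hm, ht, heq⟩ := h
      simp only at hm ht heq
      have hMq := hM q ⟨m, hm⟩
      have hnm : n ≠ m := by
        rintro rfl
        have hti := hφinj n heq
        subst hti
        have hpq : p ≠ q := by
          rintro rfl
          exact hi ht
        -- `n ∈ A p ∩ A q` is impossible, as the smaller of `W p` and `W q` is non-empty.
        obtain ⟨s', hs'⟩ := hWne p ⟨n, hn⟩
        rcases le_total p q with hle | hle
        · exact hb p q hpq n hn n hm s' hs' s' (hWmono hle hs') rfl
        · exact hi (hWmono hle ht)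
      have h1 := hd p q n hn m hm hnm t ht i heq.symm
      rw [← heq, hxv q m t hm ht]
      calc |b n i * (y q t / b m t)| = b n i / b m t * |y q t| := by
            rw [abs_mul, abs_div, abs_of_pos (hbpos n i), abs_of_pos (hbpos m t)]
            ring
        _ ≤ 1 / (M p * M q) * M q := by
            refine mul_le_mul h1 (hyM q ⟨m, hm⟩ t) (abs_nonneg _) (by positivity)
        _ = 1 / M p := by field_simp
    · rw [hx0 _ h, mul_zero, abs_zero]
      positivity

/-- Conditions (a)–(d) for a single good `M` produce a frequently universal vector. -/
lemma freqUniversal_of_cond {I : Type*} [Countable I] [Infinite I]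
    (b : ℕ → I → ℝ) (hbpos : ∀ n i, 0 < b n i)
    (φ : ℕ → I → I) (hφinj : ∀ n, Function.Injective (φ n))
    (W : ℕ → Set I) (hWfin : ∀ p, (W p).Finite) (hWmono : Monotone W)
    (hWunion : (⋃ p, W p) = Set.univ)
    (M : ℕ → ℝ) (hM : GoodM M) (E : ℕ → Set ℕ) (hE : Cond0 b φ W M E) :
    FreqUniversal b φ := by
  classical
  obtain ⟨ha, hb, hc, hd⟩ := hE
  obtain ⟨v, hv⟩ := exists_surjective_nat (I →₀ ℚ)
  -- Every `v k` is the target for infinitely many `p`, namely for `p = Nat.pair k l`.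
  let y : ℕ → I → ℝ := fun p s => (v p.unpair.1 s : ℝ)
  let G : ℕ → Prop := fun p => 1 ≤ p ∧ 1 < M p ∧ (W p).Nonempty ∧ (∀ s ∉ W p, y p s = 0) ∧
    ∀ s, |y p s| ≤ M p
  let A : ℕ → Set ℕ := fun p => {n | G p ∧ n ∈ E p ∧ ∀ s ∈ W p, |y p s| * (p + 1) ≤ b n s}
  have hG : ∀ p, (A p).Nonempty → G p := fun p ⟨n, hn⟩ => hn.1
  have hAE : ∀ p, A p ⊆ E p := fun p n hn => hn.2.1
  obtain ⟨x, hx, hxA⟩ := exists_vector b hbpos φ hφinj W hWfin hWmono M A y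
    (fun p h => (hG p h).2.1) (fun p h => (hG p h).2.2.1) (fun p h => (hG p h).2.2.2.1)
    (fun p h => (hG p h).2.2.2.2) (fun p n hn => hn.2.2)
    (fun p q hpq n hn m hm => hb p q hn.1.1 hm.1.1 hpq n (hAE p hn) m (hAE q hm))
    (fun p h s hs => (hc p (hG p h).1 s hs).mono_left
      (inf_le_inf_left _ (principal_mono.2 (hAE p))))
    (fun p q n hn m hm => hd p q hn.1.1 hm.1.1 n (hAE p hn) m (hAE q hm))
  refine ⟨x, hx, fun z hz ε hε => ?_⟩
  obtain ⟨w, hw⟩ := exists_finsupp_close hz (half_pos hε)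
  obtain ⟨k, rfl⟩ := hv w
  have hmem : ∀ s, ∀ᶠ p in atTop, s ∈ W p := by
    intro s
    have : s ∈ ⋃ p, W p := hWunion ▸ Set.mem_univ s
    obtain ⟨p₀, hp₀⟩ := Set.mem_iUnion.1 this
    filter_upwards [eventually_ge_atTop p₀] with p hp using hWmono hp hp₀
  have hev : ∀ᶠ p in atTop, 1 ≤ p ∧ 1 < M p ∧ (W p).Nonempty ∧ (∀ s ∉ W p, v k s = 0) ∧
      (∀ s, |(v k s : ℝ)| ≤ M p) ∧ 1 / M p ≤ ε / 2 := by
    obtain ⟨s₀⟩ : Nonempty I := inferInstance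
    have h1 : ∀ᶠ p in atTop, ∀ s ∈ (v k).support, s ∈ W p ∧ |(v k s : ℝ)| ≤ M p :=
      (Finset.eventually_all _).2 fun s _ =>
        (hmem s).and (hM.2.eventually_ge_atTop _)
    filter_upwards [eventually_ge_atTop 1, hM.2.eventually_gt_atTop 1, hmem s₀, h1,
      hM.2.eventually_ge_atTop (2 / ε)] with p hp1 hp2 hp3 hp4 hp5
    refine ⟨hp1, hp2, ⟨s₀, hp3⟩, fun s hs => ?_, fun s => ?_, ?_⟩
    · by_contra h
      exact hs (hp4 s (Finsupp.mem_support_iff.2 h)).1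
    · by_cases h : v k s = 0
      · rw [h]
        simpa using (hM.1 p).le
      · exact (hp4 s (Finsupp.mem_support_iff.2 h)).2
    · rw [div_le_iff₀ hε] at hp5
      rw [div_le_iff₀ (hM.1 p)]
      linarith
  obtain ⟨l, hl⟩ := eventually_atTop.1 hev
  obtain ⟨hp1, hp2, hp3, hp4, hp5, hp6⟩ := hl (Nat.pair k l) (Nat.right_le_pair k l)
  set p := Nat.pair k l with hp
  have hyp : ∀ s, y p s = v k s := fun s => by simp [y, hp]
  have hGp : G p := ⟨hp1, hp2, hp3, fun s hs => by rw [hyp, hp4 s hs, Rat.cast_zero],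
    fun s => by rw [hyp]; exact hp5 s⟩
  have htail : ∀ᶠ n in atTop ⊓ Filter.principal (E p), ∀ s ∈ W p, |y p s| * (p + 1) ≤ b n s :=
    ((hWfin p).eventually_all).2 fun s hs => (hc p hp1 s hs).eventually_ge_atTop _
  rw [eventually_inf_principal, eventually_atTop] at htail
  obtain ⟨K, hK⟩ := htail
  refine ldens_pos_of_subset (K := K) (fun n hn => ?_) (ha p hp1)
  rcases lt_or_ge n K with hnK | hnK
  · exact Or.inr hnK
  · refine Or.inl fun i => ?_
    have h1 := hxA p n ⟨hGp, hn, hK n hnK hn⟩ i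
    rw [hyp] at h1
    calc |b n i * x (φ n i) - z i|
        ≤ |b n i * x (φ n i) - v k i| + |(v k i : ℝ) - z i| := abs_sub_le _ _ _
      _ ≤ ε / 2 + ε / 2 := add_le_add (h1.trans hp6) (hw i)
      _ = ε := add_halves ε

/-! ### The equivalence -/

/-- characterization of frequently universal sequences of weighted
pseudo-shifts on `c₀(I)`. -/
theorem pseudoShifts_frequentlyUniversal_iff
    {I : Type*} [Countable I] [Infinite I]
    (b : ℕ → I → ℝ) (hbpos : ∀ n i, 0 < b n i)
    (hbbdd : ∀ n : ℕ, ∃ C : ℝ, ∀ i : I, b n i ≤ C)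
    (φ : ℕ → I → I) (hφinj : ∀ n, Function.Injective (φ n))
    (hrunaway : ∀ I₀ J₀ : Set I, I₀.Finite → J₀.Finite →
      ∃ n₀ : ℕ, ∀ n ≥ n₀, ∀ j ∈ J₀, φ n j ∉ I₀)
    (hratio : ∃ r : ℝ, 1 < r ∧ ∀ n m : ℕ, ∀ s t : I, φ n s = φ m t →
      1 / r ^ ((n : ℤ) - (m : ℤ)).natAbs ≤ b n s / b m t)
    (hg : ∃ g : I → ℝ, ∀ n m : ℕ, ∀ s t : I, φ n s = φ m t →
      ((((n : ℤ) - (m : ℤ)).natAbs : ℝ)) ≤ |g s - g t|)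
    (W : ℕ → Set I) (hWfin : ∀ p, (W p).Finite) (hWmono : Monotone W)
    (hWunion : (⋃ p, W p) = Set.univ) :
    (FreqUniversal b φ ↔ ∃ M : ℕ → ℝ, GoodM M ∧ ∃ E : ℕ → Set ℕ, Cond0 b φ W M E) ∧
    ((∃ M : ℕ → ℝ, GoodM M ∧ ∃ E : ℕ → Set ℕ, Cond0 b φ W M E) ↔
      ∀ M : ℕ → ℝ, GoodM M → ∃ E : ℕ → Set ℕ, Cond0 b φ W M E) := by
  have h₁ : (∃ M : ℕ → ℝ, GoodM M ∧ ∃ E : ℕ → Set ℕ, Cond0 b φ W M E) → FreqUniversal b φ :=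
    fun ⟨M, hM, E, hE⟩ =>
      freqUniversal_of_cond b hbpos φ hφinj W hWfin hWmono hWunion M hM E hE
  have h₂ : FreqUniversal b φ → ∀ M : ℕ → ℝ, GoodM M → ∃ E : ℕ → Set ℕ, Cond0 b φ W M E :=
    fun h M hM => cond_of_freqUniversal b hbpos φ hrunaway hratio hg W hWfin h M hM.1
  have h₃ : (∀ M : ℕ → ℝ, GoodM M → ∃ E : ℕ → Set ℕ, Cond0 b φ W M E) →
      ∃ M : ℕ → ℝ, GoodM M ∧ ∃ E : ℕ → Set ℕ, Cond0 b φ W M E := fun h => by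
    have hM : GoodM fun p => (p : ℝ) + 1 :=
      ⟨fun p => by positivity, tendsto_atTop_add_const_right _ _ tendsto_natCast_atTop_atTop⟩
    exact ⟨_, hM, h _ hM⟩
  exact ⟨⟨fun h => h₃ (h₂ h), h₁⟩, ⟨fun h => h₂ (h₁ h), h₃⟩⟩
end

section
/- Let ρ be an admissible weight function on ℝ such that ρ(x) = ρ(⌊x⌋) for every x ∈ ℝ. Define P : c₀(ℤ+D̃) → C₀^ρ(ℝ) by P((a_{k+τ})_{k∈ℤ, τ∈D̃}) = Σ_{n=0}^∞ (1/2ⁿ) Σ_{k∈ℤ, τ∈Dₙ} (a_{k+τ}/ρ(k)) φ_{k+τ}. Then the defining series converges uniformly on compact subsets of ℝ, P is a well-defined continuous linear operator from c₀(ℤ+D̃) into C₀^ρ(ℝ), P has dense range, and P ∘ B_w = T₁ ∘ P, where T₁ f(x) = f(x+1) and B_w is the weighted backward shift on c₀(ℤ+D̃) with weights w_{k+τ} = ρ(k)/ρ(k+1). In particular, B_w is quasiconjugate to the translation operator T₁ on C₀^ρ(ℝ). -/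
/-!
The nodes `ℤ + D_{n+1}` are exactly the odd multiples of `2⁻⁽ⁿ⁺¹⁾`, so the hats of level `n + 1`
have disjoint open supports, each contained in one unit cell `(k, k+1)`, on which `ρ` is constant.
At level `0` two hats meet in each cell, and admissibility gives `ρ k ≤ M * ρ (k + 1)`. Hence
every level has the closed form `lvl_zero` / `lvl_succ`, and `lvl_bound` estimates it at `x`,
weighted by `ρ x`, by the coefficients near `x`. The factors `2⁻ⁿ` then give convergence,
continuity of `P`, and decay at infinity. Linearity and the intertwining relation are read off the
closed forms level by level.

For density, the levels are the Faber–Schauder system: passing from the piecewise linear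
interpolant of `f` on the mesh `2⁻ⁿ` to that on the mesh `2⁻⁽ⁿ⁺¹⁾` adds a combination of hats of
level `n + 1` (`interp_succ`). For `f ∈ C₀^ρ(ℝ)` the corresponding coefficients, rescaled by
`2ⁿ ρ`, lie in `c₀`, so that each interpolant is in the range of `P` (`interp_in_range`), and the
interpolants converge to `f` in the weighted norm (`interp_close`).
-/

open Filter

/-- An admissible weight function on ℝ. -/
def Admissible (ρ : ℝ → ℝ) : Prop :=
  Measurable ρ ∧ (∀ x, 0 < ρ x) ∧
    ∃ M : ℝ, 1 ≤ M ∧ ∃ ω : ℝ, ∀ τ : ℝ, ∀ t : ℝ, 0 < t →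
      ρ τ ≤ M * Real.exp (ω * t) * ρ (τ + t)

/-- Membership in `C₀^ρ(ℝ)`. -/
def MemC0rho (ρ f : ℝ → ℝ) : Prop :=
  Continuous f ∧ Tendsto (fun x => f x * ρ x) atTop (nhds 0) ∧
    Tendsto (fun x => f x * ρ x) atBot (nhds 0)

/-- The dyadic level sets: `D 0 = {0}` and, for `n ≥ 1`,
`D n = {(2k-1)/2ⁿ : k = 1, …, 2^{n-1}}`. -/
def Dset : ℕ → Set ℝ
  | 0 => {0}
  | (n + 1) => {τ : ℝ | ∃ k : ℕ, 1 ≤ k ∧ k ≤ 2 ^ n ∧ τ = (2 * (k : ℝ) - 1) / 2 ^ (n + 1)}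

/-- The set of dyadic numbers except 1: `D̃ = ⋃ₙ Dₙ`. -/
def Dtilde : Set ℝ := ⋃ n : ℕ, Dset n

/-- The index set `ℤ + D̃ ⊆ ℝ`. -/
def SZD : Set ℝ := {x : ℝ | ∃ k : ℤ, ∃ τ ∈ Dtilde, x = (k : ℝ) + τ}

/-- The level-`n` slice of the index set: `ℤ + Dₙ`. -/
def SZDlevel (n : ℕ) : Set ℝ := {c : ℝ | ∃ k : ℤ, ∃ τ ∈ Dset n, c = (k : ℝ) + τ}

/-- Membership in `c₀(ℤ+D̃)`, modelled by functions on ℝ vanishing off `ℤ+D̃`. -/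
def Memc0S (a : ℝ → ℝ) : Prop :=
  (∀ x ∉ SZD, a x = 0) ∧ ∀ ε : ℝ, 0 < ε → {x : ℝ | ε ≤ |a x|}.Finite

/-- The hat function `φ_c` at level `n`: `φ_c(x) = φ(2ⁿ(x - c))`, `φ(x) = max{0, 1-|x|}`. -/
noncomputable def phiF (n : ℕ) (c x : ℝ) : ℝ := max 0 (1 - |(2 : ℝ) ^ n * (x - c)|)

/-- The `N`-th partial sum of the series defining `P`:
`Σ_{n<N} 2⁻ⁿ Σ_{k∈ℤ, τ∈Dₙ} (a_{k+τ}/ρ(k)) φ_{k+τ}(x)`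
(the inner sum has finite support). -/
noncomputable def PopPartial (ρ a : ℝ → ℝ) (N : ℕ) (x : ℝ) : ℝ :=
  ∑ n ∈ Finset.range N, (1 / 2 ^ n) *
    ∑ᶠ c ∈ SZDlevel n, (a c / ρ ((⌊c⌋ : ℤ) : ℝ)) * phiF n c x

/-- The operator `P : c₀(ℤ+D̃) → C₀^ρ(ℝ)`:
`P(a) = Σ_{n=0}^∞ 2⁻ⁿ Σ_{k∈ℤ, τ∈Dₙ} (a_{k+τ}/ρ(k)) φ_{k+τ}`. -/
noncomputable def Pop (ρ a : ℝ → ℝ) : ℝ → ℝ := fun x =>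
  ∑' n : ℕ, (1 / 2 ^ n) * ∑ᶠ c ∈ SZDlevel n, (a c / ρ ((⌊c⌋ : ℤ) : ℝ)) * phiF n c x

open Classical in
/-- The weighted backward shift `B_w` on `c₀(ℤ+D̃)` with weights `w_{k+τ} = ρ(k)/ρ(k+1)`. -/
noncomputable def BwOpS (ρ : ℝ → ℝ) (a : ℝ → ℝ) : ℝ → ℝ := fun x =>
  if x ∈ SZD then (ρ ((⌊x⌋ : ℤ) : ℝ) / ρ (((⌊x⌋ : ℤ) : ℝ) + 1)) * a (x + 1) else 0

/-- The level-`n` contribution to `Pop`, before the factor `2⁻ⁿ`. -/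
noncomputable def lvl (ρ a : ℝ → ℝ) (n : ℕ) (x : ℝ) : ℝ :=
  ∑ᶠ c ∈ SZDlevel n, (a c / ρ ((⌊c⌋ : ℤ) : ℝ)) * phiF n c x

/-- The unique point of `ℤ + D_{n+1}` whose hat function can be nonzero at `x`: the midpoint of
the dyadic interval `[j/2ⁿ, (j+1)/2ⁿ)` containing `x`. -/
noncomputable def mid (n : ℕ) (x : ℝ) : ℝ := (2 * (⌊(2 : ℝ) ^ n * x⌋ : ℝ) + 1) / 2 ^ (n + 1)

/-- The piecewise linear interpolant of `f` at the nodes `j/2ⁿ`, `j ∈ ℤ`. -/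
noncomputable def interp (f : ℝ → ℝ) (n : ℕ) (x : ℝ) : ℝ :=
  (1 - Int.fract ((2 : ℝ) ^ n * x)) * f ((⌊(2 : ℝ) ^ n * x⌋ : ℝ) / 2 ^ n) +
    Int.fract ((2 : ℝ) ^ n * x) * f (((⌊(2 : ℝ) ^ n * x⌋ : ℝ) + 1) / 2 ^ n)

/-- The Faber–Schauder coefficient of `f` at a node `c` of level `n`. -/
noncomputable def schauderCoeff (f : ℝ → ℝ) : ℕ → ℝ → ℝ
  | 0, c => f c
  | (n + 1), c => f c - (f (c - 1 / 2 ^ (n + 1)) + f (c + 1 / 2 ^ (n + 1))) / 2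

/-! ### The dyadic nodes -/

lemma mem_level_zero (c : ℝ) : c ∈ SZDlevel 0 ↔ ∃ k : ℤ, c = k := by
  simp [SZDlevel, Dset]

/-- The nodes of level `n + 1` are the odd multiples of `2⁻⁽ⁿ⁺¹⁾`. -/
lemma mem_level_succ (n : ℕ) (c : ℝ) :
    c ∈ SZDlevel (n + 1) ↔ ∃ m : ℤ, c = (2 * (m : ℝ) + 1) / 2 ^ (n + 1) := by
  constructor
  · rintro ⟨k, τ, ⟨j, -, -, rfl⟩, rfl⟩
    refine ⟨k * 2 ^ n + j - 1, ?_⟩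
    push_cast
    field_simp
    ring
  · rintro ⟨m, rfl⟩
    have hp : (0 : ℤ) < 2 ^ n := by positivity
    have h0 := Int.emod_nonneg m hp.ne'
    have h1 := Int.emod_lt_of_pos m hp
    have h2 := Int.emod_add_mul_ediv m (2 ^ n)
    obtain ⟨r, hr⟩ := Int.eq_ofNat_of_zero_le h0
    rw [hr] at h1 h2
    refine ⟨m / 2 ^ n, (2 * ((r + 1 : ℕ) : ℝ) - 1) / 2 ^ (n + 1), ⟨r + 1, by omega, ?_, rfl⟩, ?_⟩
    · have : (r : ℤ) + 1 ≤ 2 ^ n := h1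
      exact_mod_cast this
    · have h3 : (m : ℝ) = r + 2 ^ n * ((m / 2 ^ n : ℤ) : ℝ) := by
        rw [← h2]; push_cast; simp [h2]
      generalize ((m / 2 ^ n : ℤ) : ℝ) = q at *
      rw [h3]
      push_cast
      field_simp
      ring

lemma level_subset (n : ℕ) {c : ℝ} (h : c ∈ SZDlevel n) : c ∈ SZD := by
  obtain ⟨k, τ, hτ, rfl⟩ := h
  exact ⟨k, τ, Set.mem_iUnion.2 ⟨n, hτ⟩, rfl⟩

lemma level_int (n : ℕ) {c : ℝ} (h : c ∈ SZDlevel n) : ∃ m : ℤ, c = (m : ℝ) / 2 ^ n := by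
  cases n with
  | zero => obtain ⟨k, rfl⟩ := (mem_level_zero c).1 h; exact ⟨k, by simp⟩
  | succ n =>
    obtain ⟨m, rfl⟩ := (mem_level_succ n c).1 h
    exact ⟨2 * m + 1, by push_cast; rfl⟩

/-- A node of level `n + 1` is an odd multiple of `2⁻⁽ⁿ⁺¹⁾`, a node of lower level an even one. -/
lemma level_disjoint_lt {m n : ℕ} (hmn : m < n) {c : ℝ} (h : c ∈ SZDlevel m)
    (h' : c ∈ SZDlevel n) : False := by
  obtain ⟨d, rfl⟩ : ∃ d, n = m + d + 1 := ⟨n - m - 1, by omega⟩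
  obtain ⟨j, hj⟩ := level_int m h
  obtain ⟨k, hk⟩ := (mem_level_succ _ c).1 h'
  rw [hk] at hj
  have h1 : (2 * (k : ℝ) + 1) = 2 * (2 ^ d * j) := by
    field_simp at hj
    have : (2 : ℝ) ^ (m + d + 1) = 2 ^ m * (2 ^ d * 2) := by ring
    rw [this] at hj
    have hp : (2 : ℝ) ^ m ≠ 0 := by positivity
    apply mul_left_cancel₀ hp
    linarith
  have h2 : 2 * k + 1 = 2 * (2 ^ d * j) := by exact_mod_cast h1
  omega

lemma level_disjoint {m n : ℕ} (hmn : m ≠ n) {c : ℝ} (h : c ∈ SZDlevel m) :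
    c ∉ SZDlevel n := fun h' => by
  rcases lt_or_gt_of_ne hmn with h1 | h1
  · exact level_disjoint_lt h1 h h'
  · exact level_disjoint_lt h1 h' h

lemma level_finite (n : ℕ) (u v : ℝ) : {c | c ∈ SZDlevel n ∧ u ≤ c ∧ c ≤ v}.Finite := by
  have hfin : (Set.Icc ⌊u * 2 ^ n⌋ ⌈v * 2 ^ n⌉).Finite := Set.finite_Icc _ _
  apply (hfin.image (fun m : ℤ => (m : ℝ) / 2 ^ n)).subset
  rintro c ⟨hc, h1, h2⟩
  obtain ⟨m, rfl⟩ := level_int n hc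
  have hp : (0 : ℝ) < 2 ^ n := by positivity
  rw [le_div_iff₀ hp] at h1
  rw [div_le_iff₀ hp] at h2
  refine ⟨m, ⟨?_, ?_⟩, rfl⟩
  · exact_mod_cast (Int.floor_le _).trans h1
  · exact_mod_cast h2.trans (Int.le_ceil _)

lemma mid_mem (n : ℕ) (x : ℝ) : mid n x ∈ SZDlevel (n + 1) :=
  (mem_level_succ n _).2 ⟨_, rfl⟩

/-- The hat function centred at `mid n x`, in terms of the position of `x` in its dyadic cell. -/
lemma scaled_sub_mid (n : ℕ) (x : ℝ) :
    (2 : ℝ) ^ (n + 1) * (x - mid n x) = 2 * Int.fract ((2 : ℝ) ^ n * x) - 1 := by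
  have := Int.self_sub_floor ((2 : ℝ) ^ n * x)
  rw [← this, mid]
  field_simp
  ring

lemma floor_mid (n : ℕ) (x : ℝ) : ⌊mid n x⌋ = ⌊x⌋ := by
  have hp : (0 : ℝ) < 2 ^ n := by positivity
  have h1 : ⌊x⌋ * 2 ^ n ≤ ⌊(2 : ℝ) ^ n * x⌋ := by
    rw [Int.le_floor]; push_cast
    have := Int.floor_le x
    nlinarith
  have h2 : ⌊(2 : ℝ) ^ n * x⌋ < (⌊x⌋ + 1) * 2 ^ n := by
    rw [Int.floor_lt]; push_cast
    have := Int.lt_floor_add_one x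
    nlinarith
  have h1' : (⌊x⌋ : ℝ) * 2 ^ n ≤ ⌊(2 : ℝ) ^ n * x⌋ := by exact_mod_cast h1
  have h2' : (⌊(2 : ℝ) ^ n * x⌋ : ℝ) + 1 ≤ (⌊x⌋ + 1) * 2 ^ n := by exact_mod_cast h2
  rw [Int.floor_eq_iff, mid, le_div_iff₀ (by positivity), div_lt_iff₀ (by positivity), pow_succ]
  constructor <;> nlinarith

lemma abs_mid_sub_le (n : ℕ) (x : ℝ) : |mid n x - x| ≤ 1 := by
  have h := scaled_sub_mid n x
  have h0 := Int.fract_nonneg ((2 : ℝ) ^ n * x)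
  have h1 := Int.fract_lt_one ((2 : ℝ) ^ n * x)
  have hp : (1 : ℝ) ≤ 2 ^ (n + 1) := one_le_pow₀ (by norm_num)
  rw [abs_le]
  constructor
  · by_contra hc
    nlinarith
  · by_contra hc
    nlinarith

/-! ### Closed form of the levels -/

lemma finsum_of_pos {p : Prop} (h : p) (v : ℝ) : ∑ᶠ _ : p, v = v := by simp [h]

lemma finsum_of_neg {p : Prop} (h : ¬p) (v : ℝ) : ∑ᶠ _ : p, v = 0 := by simp [h]

lemma phiF_eq_zero {n : ℕ} {c x : ℝ} (h : 1 ≤ |(2 : ℝ) ^ n * (x - c)|) : phiF n c x = 0 := by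
  rw [phiF, max_eq_left]; linarith

lemma lvl_succ (ρ a : ℝ → ℝ) (n : ℕ) (x : ℝ) :
    lvl ρ a (n + 1) x = a (mid n x) / ρ ((⌊x⌋ : ℤ) : ℝ) *
      (1 - |2 * Int.fract ((2 : ℝ) ^ n * x) - 1|) := by
  have h0 := Int.fract_nonneg ((2 : ℝ) ^ n * x)
  have h1 := Int.fract_lt_one ((2 : ℝ) ^ n * x)
  rw [lvl, finsum_eq_single _ (mid n x)]
  · rw [finsum_of_pos (mid_mem n x), floor_mid, phiF, scaled_sub_mid, max_eq_right]
    rw [sub_nonneg, abs_le]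
    constructor <;> linarith
  · intro c hc
    by_cases hm : c ∈ SZDlevel (n + 1)
    · rw [finsum_of_pos hm]
      obtain ⟨m, rfl⟩ := (mem_level_succ n c).1 hm
      rw [phiF_eq_zero, mul_zero]
      have hne : m ≠ ⌊(2 : ℝ) ^ n * x⌋ := by rintro rfl; exact hc rfl
      have e : (2 : ℝ) ^ (n + 1) * (x - (2 * (m : ℝ) + 1) / 2 ^ (n + 1))
          = 2 * ((2 : ℝ) ^ n * x) - 2 * m - 1 := by
        field_simp
        ring
      rw [e, le_abs]
      rcases lt_or_gt_of_ne hne with h | h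
      · left
        have h' : (m : ℝ) + 1 ≤ ⌊(2 : ℝ) ^ n * x⌋ := by exact_mod_cast h
        have := Int.floor_le ((2 : ℝ) ^ n * x)
        linarith
      · right
        have h' : (⌊(2 : ℝ) ^ n * x⌋ : ℝ) + 1 ≤ m := by exact_mod_cast h
        have := Int.lt_floor_add_one ((2 : ℝ) ^ n * x)
        linarith
    · rw [finsum_of_neg hm]

lemma lvl_zero (ρ a : ℝ → ℝ) (x : ℝ) :
    lvl ρ a 0 x = a ⌊x⌋ / ρ ((⌊x⌋ : ℤ) : ℝ) * (1 - Int.fract x) +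
      a (⌊x⌋ + 1) / ρ ((⌊x⌋ : ℤ) + 1) * Int.fract x := by
  have h0 := Int.fract_nonneg x
  have h1 := Int.fract_lt_one x
  have hs := Int.self_sub_floor x
  have hsub : (Function.support fun c =>
      ∑ᶠ (_ : c ∈ SZDlevel 0), a c / ρ ((⌊c⌋ : ℤ) : ℝ) * phiF 0 c x) ⊆
      ↑({(⌊x⌋ : ℝ), (⌊x⌋ : ℝ) + 1} : Finset ℝ) := by
    intro c hc
    by_contra hcn
    apply hc
    by_cases hm : c ∈ SZDlevel 0
    · obtain ⟨m, rfl⟩ := (mem_level_zero c).1 hm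
      simp only [Finset.coe_insert, Finset.coe_singleton, Set.mem_insert_iff,
        Set.mem_singleton_iff, not_or] at hcn
      have n1 : m ≠ ⌊x⌋ := by exact_mod_cast hcn.1
      have n2 : m ≠ ⌊x⌋ + 1 := by exact_mod_cast hcn.2
      beta_reduce
      rw [finsum_of_pos hm]
      rw [phiF_eq_zero, mul_zero]
      rw [pow_zero, one_mul, le_abs]
      rcases lt_or_gt_of_ne n1 with h | h
      · left
        have h' : (m : ℝ) + 1 ≤ ⌊x⌋ := by exact_mod_cast h
        linarith
      · right
        have h' : (⌊x⌋ : ℝ) + 2 ≤ m := by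
          have : ⌊x⌋ + 2 ≤ m := by omega
          exact_mod_cast this
        linarith
    · exact finsum_of_neg hm _
  rw [lvl, finsum_eq_sum_of_support_subset _ hsub, Finset.sum_pair (by simp)]
  have m1 : (⌊x⌋ : ℝ) ∈ SZDlevel 0 := (mem_level_zero _).2 ⟨_, rfl⟩
  have m2 : (⌊x⌋ : ℝ) + 1 ∈ SZDlevel 0 := (mem_level_zero _).2 ⟨⌊x⌋ + 1, by push_cast; rfl⟩
  rw [finsum_of_pos m1, finsum_of_pos m2]
  have f1 : ⌊((⌊x⌋ : ℤ) : ℝ)⌋ = ⌊x⌋ := Int.floor_intCast _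
  have f2 : ⌊((⌊x⌋ : ℤ) : ℝ) + 1⌋ = ⌊x⌋ + 1 := by simp
  have p1 : phiF 0 (⌊x⌋ : ℝ) x = 1 - Int.fract x := by
    rw [phiF, pow_zero, one_mul, hs, abs_of_nonneg h0, max_eq_right (by linarith)]
  have p2 : phiF 0 ((⌊x⌋ : ℝ) + 1) x = Int.fract x := by
    rw [phiF, pow_zero, one_mul, abs_of_nonpos (by linarith), max_eq_right (by linarith)]
    linarith
  rw [f1, f2, p1, p2]
  push_cast
  rfl

/-- The hats of a fixed level form a locally finite family. -/
lemma continuous_lvl (ρ a : ℝ → ℝ) (n : ℕ) : Continuous (lvl ρ a n) := by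
  have e : lvl ρ a n = fun x => ∑ᶠ c : SZDlevel n,
      (a c / ρ ((⌊(c : ℝ)⌋ : ℤ) : ℝ)) * phiF n c x := by
    funext x
    exact (finsum_set_coe_eq_finsum_mem (f := fun c => (a c / ρ ((⌊c⌋ : ℤ) : ℝ)) * phiF n c x)
      (SZDlevel n)).symm
  rw [e]
  apply continuous_finsum
  · intro c
    unfold phiF
    fun_prop
  · intro x
    refine ⟨Metric.ball x 1, Metric.ball_mem_nhds x one_pos, ?_⟩
    refine (((level_finite n (x - 2) (x + 2)).preimage
      (f := ((↑) : SZDlevel n → ℝ)) Subtype.val_injective.injOn)).subset ?_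
    rintro ⟨c, hc⟩ ⟨y, hy, hyb⟩
    refine ⟨hc, ?_⟩
    have hphi : phiF n c y ≠ 0 := right_ne_zero_of_mul hy
    have h1 : |(2 : ℝ) ^ n * (y - c)| < 1 := by
      by_contra hcon
      exact hphi (phiF_eq_zero (not_lt.1 hcon))
    have hp : (1 : ℝ) ≤ 2 ^ n := one_le_pow₀ (by norm_num)
    have h2 : |y - c| < 1 := by
      rw [abs_mul, abs_of_pos (by positivity)] at h1
      nlinarith [abs_nonneg (y - c)]
    rw [Metric.mem_ball, Real.dist_eq] at hyb
    rw [abs_lt] at h2 hyb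
    constructor <;> simp only <;> linarith

/-! ### Weighted estimates and convergence -/

lemma exists_step {ρ : ℝ → ℝ} (hρ : Admissible ρ) :
    ∃ M : ℝ, 1 ≤ M ∧ ∀ x, ρ x ≤ M * ρ (x + 1) := by
  obtain ⟨-, hpos, M, hM, ω, h⟩ := hρ
  refine ⟨M * Real.exp |ω|, ?_, fun x => ?_⟩
  · have := Real.one_le_exp (abs_nonneg ω)
    nlinarith
  · refine (h x 1 one_pos).trans ?_
    have := hpos (x + 1)
    have h2 : ω * 1 ≤ |ω| := by rw [mul_one]; exact le_abs_self ω
    gcongr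

lemma exists_bounds {ρ : ℝ → ℝ} (hρ : Admissible ρ) (R : ℝ) :
    ∃ A B : ℝ, 0 < A ∧ 0 < B ∧ ∀ x, |x| ≤ R → A ≤ ρ x ∧ ρ x ≤ B := by
  obtain ⟨-, hpos, M, hM, ω, h⟩ := hρ
  have key : ∀ x t, 0 < t → t ≤ 2 * R + 1 →
      ρ x ≤ M * Real.exp (|ω| * (2 * R + 1)) * ρ (x + t) := by
    intro x t ht ht'
    refine (h x t ht).trans ?_
    have := hpos (x + t)
    have h2 : ω * t ≤ |ω| * (2 * R + 1) :=
      mul_le_mul (le_abs_self ω) ht' ht.le (abs_nonneg ω)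
    gcongr
  have hE : 0 < M * Real.exp (|ω| * (2 * R + 1)) := by positivity
  refine ⟨ρ (-R - 1) / (M * Real.exp (|ω| * (2 * R + 1))),
    M * Real.exp (|ω| * (2 * R + 1)) * ρ (R + 1), div_pos (hpos _) hE,
    mul_pos hE (hpos _), fun x hx => ?_⟩
  rw [abs_le] at hx
  constructor
  · rw [div_le_iff₀' hE]
    have := key (-R - 1) (x + R + 1) (by linarith) (by linarith)
    rwa [show -R - 1 + (x + R + 1) = x by ring] at this
  · have := key x (R + 1 - x) (by linarith) (by linarith)
    rwa [show x + (R + 1 - x) = R + 1 by ring] at this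

/-- Each level is controlled at `x` by the coefficients within distance `1` of `x`. -/
lemma lvl_bound {ρ : ℝ → ℝ} (hpos : ∀ x, 0 < ρ x)
    (hfloor : ∀ x : ℝ, ρ x = ρ ((⌊x⌋ : ℤ) : ℝ)) {M : ℝ} (hM : 1 ≤ M)
    (hstep : ∀ x, ρ x ≤ M * ρ (x + 1)) (a : ℝ → ℝ) {δ : ℝ} (hδ : 0 ≤ δ) (x : ℝ)
    (ha : ∀ c, |c - x| ≤ 1 → |a c| ≤ δ) (n : ℕ) : |lvl ρ a n x| * ρ x ≤ M * δ := by
  cases n with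
  | zero =>
    have h0 := Int.fract_nonneg x
    have h1 := Int.fract_lt_one x
    have hs := Int.self_sub_floor x
    have a1 := ha ⌊x⌋ (by rw [abs_le]; constructor <;> linarith)
    have a2 := ha (⌊x⌋ + 1) (by rw [abs_le]; constructor <;> linarith)
    have r1 := hpos ⌊x⌋
    have r2 := hpos (⌊x⌋ + 1)
    have r3 := hstep ⌊x⌋
    rw [lvl_zero, hfloor x]
    set k : ℝ := (⌊x⌋ : ℝ)
    set t := Int.fract x
    have b1 : |a k / ρ k * (1 - t)| * ρ k ≤ δ * (1 - t) := by
      rw [abs_mul, abs_div, abs_of_pos r1, abs_of_nonneg (by linarith : 0 ≤ 1 - t)]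
      have : |a k| / ρ k * (1 - t) * ρ k = |a k| * (1 - t) := by field_simp
      rw [this]
      exact mul_le_mul_of_nonneg_right a1 (by linarith)
    have b2 : |a (k + 1) / ρ (k + 1) * t| * ρ k ≤ M * δ * t := by
      rw [abs_mul, abs_div, abs_of_pos r2, abs_of_nonneg h0]
      have e : |a (k + 1)| / ρ (k + 1) * t * ρ k = |a (k + 1)| * t * (ρ k / ρ (k + 1)) := by
        field_simp
      have q : ρ k / ρ (k + 1) ≤ M := by rw [div_le_iff₀ r2]; exact r3
      rw [e]
      calc |a (k + 1)| * t * (ρ k / ρ (k + 1)) ≤ δ * t * M := by gcongr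
        _ = M * δ * t := by ring
    have b3 := abs_add_le (a k / ρ k * (1 - t)) (a (k + 1) / ρ (k + 1) * t)
    have b4 := mul_le_mul_of_nonneg_right b3 r1.le
    have b5 : δ * (1 - t) ≤ M * δ * (1 - t) := by
      have : δ ≤ M * δ := by nlinarith
      exact mul_le_mul_of_nonneg_right this (by linarith)
    nlinarith
  | succ n =>
    rw [lvl_succ, hfloor x]
    have a1 := ha _ (abs_mid_sub_le n x)
    have r1 := hpos ⌊x⌋
    have h0 := Int.fract_nonneg ((2 : ℝ) ^ n * x)
    have h1 := Int.fract_lt_one ((2 : ℝ) ^ n * x)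
    have h2 : |2 * Int.fract ((2 : ℝ) ^ n * x) - 1| ≤ 1 := by
      rw [abs_le]; constructor <;> linarith
    have h3 := abs_nonneg (2 * Int.fract ((2 : ℝ) ^ n * x) - 1)
    set s := |2 * Int.fract ((2 : ℝ) ^ n * x) - 1|
    rw [abs_mul, abs_div, abs_of_pos r1, abs_of_nonneg (by linarith : 0 ≤ 1 - s)]
    have e : |a (mid n x)| / ρ ⌊x⌋ * (1 - s) * ρ ⌊x⌋ = |a (mid n x)| * (1 - s) := by
      field_simp
    rw [e]
    calc |a (mid n x)| * (1 - s) ≤ δ * 1 := by gcongr; linarith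
      _ ≤ M * δ := by nlinarith

lemma bddAbove_of_mem {a : ℝ → ℝ} (ha : Memc0S a) : BddAbove (Set.range fun y => |a y|) := by
  obtain ⟨B, hB⟩ := ((ha.2 1 one_pos).image fun y => |a y|).bddAbove
  refine ⟨max 1 B, ?_⟩
  rintro _ ⟨y, rfl⟩
  rcases le_or_gt 1 |a y| with h | h
  · exact (hB ⟨y, h, rfl⟩).trans (le_max_right _ _)
  · exact h.le.trans (le_max_left _ _)

lemma Pop_eq (ρ a : ℝ → ℝ) (x : ℝ) : Pop ρ a x = ∑' n : ℕ, (1 / 2 ^ n) * lvl ρ a n x := rfl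

lemma summable_lvl {ρ : ℝ → ℝ} (hρ : Admissible ρ)
    (hfloor : ∀ x : ℝ, ρ x = ρ ((⌊x⌋ : ℤ) : ℝ)) {a : ℝ → ℝ} (ha : Memc0S a) (x : ℝ) :
    Summable fun n : ℕ => (1 / 2 ^ n) * lvl ρ a n x := by
  obtain ⟨M, hM, hstep⟩ := exists_step hρ
  obtain ⟨B, hB⟩ := bddAbove_of_mem ha
  have hB' : ∀ y, |a y| ≤ B := fun y => hB ⟨y, rfl⟩
  have hpos := hρ.2.1
  have hB0 : 0 ≤ B := (abs_nonneg _).trans (hB' 0)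
  refine Summable.of_norm_bounded (g := fun n : ℕ => (1 / 2 : ℝ) ^ n * (M * B / ρ x))
    (summable_geometric_two.mul_right _) fun n => ?_
  have h := lvl_bound hpos hfloor hM hstep a hB0 x (fun c _ => hB' c) n
  rw [Real.norm_eq_abs, abs_mul, abs_of_pos (by positivity), one_div_pow]
  gcongr
  rwa [le_div_iff₀ (hpos x)]

lemma Pop_bound {ρ : ℝ → ℝ} (hpos : ∀ x, 0 < ρ x)
    (hfloor : ∀ x : ℝ, ρ x = ρ ((⌊x⌋ : ℤ) : ℝ)) {M : ℝ} (hM : 1 ≤ M)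
    (hstep : ∀ x, ρ x ≤ M * ρ (x + 1)) (a : ℝ → ℝ) {δ : ℝ} (hδ : 0 ≤ δ) (x : ℝ)
    (ha : ∀ c, |c - x| ≤ 1 → |a c| ≤ δ) : |Pop ρ a x| * ρ x ≤ 2 * M * δ := by
  have hs : HasSum (fun n : ℕ => (1 / 2 : ℝ) ^ n * (M * δ / ρ x)) (2 * (M * δ / ρ x)) :=
    hasSum_geometric_two.mul_right _
  have h := tsum_of_norm_bounded (f := fun n : ℕ => (1 / 2 ^ n) * lvl ρ a n x) hs fun n => by
    have h := lvl_bound hpos hfloor hM hstep a hδ x ha n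
    rw [Real.norm_eq_abs, abs_mul, abs_of_pos (by positivity), one_div_pow]
    gcongr
    rwa [le_div_iff₀ (hpos x)]
  rw [← Pop_eq, Real.norm_eq_abs] at h
  have hx := hpos x
  calc |Pop ρ a x| * ρ x ≤ 2 * (M * δ / ρ x) * ρ x := by gcongr
    _ = 2 * M * δ := by field_simp

lemma tendstoUniformlyOn_Pop {ρ : ℝ → ℝ} (hρ : Admissible ρ)
    (hfloor : ∀ x : ℝ, ρ x = ρ ((⌊x⌋ : ℤ) : ℝ)) {a : ℝ → ℝ} (ha : Memc0S a) {K : Set ℝ}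
    (hK : IsCompact K) :
    TendstoUniformlyOn (fun N x => PopPartial ρ a N x) (Pop ρ a) atTop K := by
  obtain ⟨M, hM, hstep⟩ := exists_step hρ
  obtain ⟨B, hB⟩ := bddAbove_of_mem ha
  have hB' : ∀ y, |a y| ≤ B := fun y => hB ⟨y, rfl⟩
  have hpos := hρ.2.1
  have hB0 : 0 ≤ B := (abs_nonneg _).trans (hB' 0)
  obtain ⟨R, hR⟩ := hK.isBounded.exists_norm_le
  obtain ⟨A, _, hA, -, hAB⟩ := exists_bounds hρ R
  refine tendstoUniformlyOn_tsum_nat (f := fun n x => (1 / 2 ^ n) * lvl ρ a n x)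
    (u := fun n : ℕ => (1 / 2 : ℝ) ^ n * (M * B / A))
    (summable_geometric_two.mul_right _) fun n x hx => ?_
  have h := lvl_bound hpos hfloor hM hstep a hB0 x (fun c _ => hB' c) n
  have hAx := (hAB x (hR x hx)).1
  rw [Real.norm_eq_abs, abs_mul, abs_of_pos (by positivity), one_div_pow]
  gcongr
  rw [le_div_iff₀ hA]
  exact (mul_le_mul_of_nonneg_left hAx (abs_nonneg _)).trans h

lemma Pop_mem {ρ : ℝ → ℝ} (hρ : Admissible ρ)
    (hfloor : ∀ x : ℝ, ρ x = ρ ((⌊x⌋ : ℤ) : ℝ)) {a : ℝ → ℝ} (ha : Memc0S a) :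
    MemC0rho ρ (Pop ρ a) := by
  have hpos := hρ.2.1
  obtain ⟨M, hM, hstep⟩ := exists_step hρ
  have key : ∀ ε > 0, ∃ R, ∀ x, R ≤ |x| → |Pop ρ a x * ρ x| < ε := by
    intro ε hε
    have hδ : 0 < ε / (4 * M) := by positivity
    obtain ⟨R, hR⟩ := (ha.2 _ hδ).isBounded.exists_norm_le
    refine ⟨R + 2, fun x hx => ?_⟩
    rw [abs_mul, abs_of_pos (hpos x)]
    have h := Pop_bound hpos hfloor hM hstep a hδ.le x fun c hc => by
      by_contra hcon
      have h1 : |c| ≤ R := hR c (not_le.1 hcon).le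
      have h2 := abs_sub_abs_le_abs_sub x c
      rw [abs_sub_comm] at h2
      linarith
    have e : 2 * M * (ε / (4 * M)) = ε / 2 := by field_simp; norm_num
    linarith
  refine ⟨?_, ?_, ?_⟩
  · have h : TendstoLocallyUniformly (fun N x => PopPartial ρ a N x) (Pop ρ a) atTop :=
      tendstoLocallyUniformly_iff_forall_isCompact.2 fun K hK =>
        tendstoUniformlyOn_Pop hρ hfloor ha hK
    refine h.continuous (Frequently.of_forall fun N => ?_)
    refine continuous_finsetSum _ fun n _ => ?_
    exact continuous_const.mul (continuous_lvl ρ a n)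
  · rw [Metric.tendsto_nhds]
    intro ε hε
    obtain ⟨R, hR⟩ := key ε hε
    filter_upwards [eventually_ge_atTop R] with x hx
    rw [Real.dist_eq, sub_zero]
    exact hR x (hx.trans (le_abs_self x))
  · rw [Metric.tendsto_nhds]
    intro ε hε
    obtain ⟨R, hR⟩ := key ε hε
    filter_upwards [eventually_le_atBot (-R)] with x hx
    rw [Real.dist_eq, sub_zero]
    exact hR x (by have := neg_le_abs x; linarith)

/-! ### Linearity and the intertwining relation -/

lemma lvl_linear (ρ a b : ℝ → ℝ) (c : ℝ) (n : ℕ) (x : ℝ) :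
    lvl ρ (fun y => a y + c * b y) n x = lvl ρ a n x + c * lvl ρ b n x := by
  cases n with
  | zero => simp only [lvl_zero]; ring
  | succ n => simp only [lvl_succ]; ring

lemma Pop_linear {ρ : ℝ → ℝ} (hρ : Admissible ρ)
    (hfloor : ∀ x : ℝ, ρ x = ρ ((⌊x⌋ : ℤ) : ℝ)) {a b : ℝ → ℝ} (ha : Memc0S a)
    (hb : Memc0S b) (c x : ℝ) :
    Pop ρ (fun y => a y + c * b y) x = Pop ρ a x + c * Pop ρ b x := by
  simp only [Pop_eq]
  rw [← tsum_mul_left, ← (summable_lvl hρ hfloor ha x).tsum_add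
    ((summable_lvl hρ hfloor hb x).mul_left c)]
  refine tsum_congr fun n => ?_
  rw [lvl_linear]
  ring

lemma BwOpS_of_mem (ρ a : ℝ → ℝ) (n : ℕ) {c : ℝ} (hc : c ∈ SZDlevel n) :
    BwOpS ρ a c = (ρ ((⌊c⌋ : ℤ) : ℝ) / ρ (((⌊c⌋ : ℤ) : ℝ) + 1)) * a (c + 1) :=
  if_pos (level_subset n hc)

lemma mid_add_one (n : ℕ) (x : ℝ) : mid n (x + 1) = mid n x + 1 := by
  have : (2 : ℝ) ^ n * (x + 1) = 2 ^ n * x + ((2 ^ n : ℤ) : ℝ) := by push_cast; ring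
  rw [mid, mid, this, Int.floor_add_intCast]
  push_cast
  field_simp
  ring

lemma lvl_shift {ρ : ℝ → ℝ} (hpos : ∀ x, 0 < ρ x) (a : ℝ → ℝ) (n : ℕ) (x : ℝ) :
    lvl ρ (BwOpS ρ a) n x = lvl ρ a n (x + 1) := by
  have r1 := (hpos ⌊x⌋).ne'
  have r2 := (hpos (⌊x⌋ + 1)).ne'
  cases n with
  | zero =>
    have r3 := (hpos (⌊x⌋ + 1 + 1)).ne'
    have m1 : (⌊x⌋ : ℝ) ∈ SZDlevel 0 := (mem_level_zero _).2 ⟨_, rfl⟩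
    have m2 : (⌊x⌋ : ℝ) + 1 ∈ SZDlevel 0 := (mem_level_zero _).2 ⟨⌊x⌋ + 1, by push_cast; rfl⟩
    rw [lvl_zero, lvl_zero, BwOpS_of_mem ρ a 0 m1, BwOpS_of_mem ρ a 0 m2, Int.fract_add_one,
      Int.floor_add_one, Int.floor_add_one, Int.floor_intCast]
    push_cast
    field_simp
  | succ n =>
    have e : Int.fract ((2 : ℝ) ^ n * (x + 1)) = Int.fract ((2 : ℝ) ^ n * x) := by
      have : (2 : ℝ) ^ n * (x + 1) = 2 ^ n * x + ((2 ^ n : ℤ) : ℝ) := by push_cast; ring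
      rw [this, Int.fract_add_intCast]
    rw [lvl_succ, lvl_succ, BwOpS_of_mem ρ a (n + 1) (mid_mem n x), floor_mid, mid_add_one, e,
      Int.floor_add_one]
    push_cast
    field_simp

/-! ### Dense range -/

lemma interp_zero (f : ℝ → ℝ) (x : ℝ) :
    interp f 0 x = (1 - Int.fract x) * f ⌊x⌋ + Int.fract x * f (⌊x⌋ + 1) := by
  simp [interp]

/-- Halving the mesh adds to the interpolant the next level of the Faber–Schauder expansion. -/
lemma interp_succ (f : ℝ → ℝ) (n : ℕ) (x : ℝ) :
    interp f (n + 1) x = interp f n x +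
      schauderCoeff f (n + 1) (mid n x) * (1 - |2 * Int.fract ((2 : ℝ) ^ n * x) - 1|) := by
  have h0 := Int.fract_nonneg ((2 : ℝ) ^ n * x)
  have h1 := Int.fract_lt_one ((2 : ℝ) ^ n * x)
  have hs := Int.self_sub_floor ((2 : ℝ) ^ n * x)
  have e2 : (2 : ℝ) ^ (n + 1) * x = 2 * (2 ^ n * x) := by ring
  have c1 : mid n x - 1 / 2 ^ (n + 1) = (⌊(2 : ℝ) ^ n * x⌋ : ℝ) / 2 ^ n := by
    rw [mid]; field_simp; ring
  have c2 : mid n x + 1 / 2 ^ (n + 1) = ((⌊(2 : ℝ) ^ n * x⌋ : ℝ) + 1) / 2 ^ n := by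
    rw [mid]; field_simp; ring
  rw [interp, interp, schauderCoeff, c1, c2]
  rw [← Int.self_sub_floor ((2 : ℝ) ^ (n + 1) * x), e2]
  rcases lt_or_ge (Int.fract ((2 : ℝ) ^ n * x)) (1 / 2) with ht | ht
  · have fl : ⌊2 * ((2 : ℝ) ^ n * x)⌋ = 2 * ⌊(2 : ℝ) ^ n * x⌋ := by
      rw [Int.floor_eq_iff]; push_cast; constructor <;> linarith
    have d1 : ((2 * ⌊(2 : ℝ) ^ n * x⌋ : ℤ) : ℝ) / 2 ^ (n + 1)
        = (⌊(2 : ℝ) ^ n * x⌋ : ℝ) / 2 ^ n := by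
      push_cast; field_simp; ring
    have d2 : (((2 * ⌊(2 : ℝ) ^ n * x⌋ : ℤ) : ℝ) + 1) / 2 ^ (n + 1) = mid n x := by
      rw [mid]; push_cast; rfl
    have d3 : 2 * ((2 : ℝ) ^ n * x) - ((2 * ⌊(2 : ℝ) ^ n * x⌋ : ℤ) : ℝ)
        = 2 * Int.fract ((2 : ℝ) ^ n * x) := by
      push_cast; linarith
    rw [fl, d1, d2, d3, abs_of_nonpos (by linarith)]
    ring
  · have fl : ⌊2 * ((2 : ℝ) ^ n * x)⌋ = 2 * ⌊(2 : ℝ) ^ n * x⌋ + 1 := by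
      rw [Int.floor_eq_iff]; push_cast; constructor <;> linarith
    have d1 : ((2 * ⌊(2 : ℝ) ^ n * x⌋ + 1 : ℤ) : ℝ) / 2 ^ (n + 1) = mid n x := by
      rw [mid]; push_cast; rfl
    have d2 : (((2 * ⌊(2 : ℝ) ^ n * x⌋ + 1 : ℤ) : ℝ) + 1) / 2 ^ (n + 1)
        = ((⌊(2 : ℝ) ^ n * x⌋ : ℝ) + 1) / 2 ^ n := by
      push_cast; field_simp; ring
    have d3 : 2 * ((2 : ℝ) ^ n * x) - ((2 * ⌊(2 : ℝ) ^ n * x⌋ + 1 : ℤ) : ℝ)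
        = 2 * Int.fract ((2 : ℝ) ^ n * x) - 1 := by
      push_cast; linarith
    rw [fl, d1, d2, d3, abs_of_nonneg (by linarith)]
    ring

lemma decay {ρ f : ℝ → ℝ} (hpos : ∀ x, 0 < ρ x) (hf : MemC0rho ρ f) {η : ℝ} (hη : 0 < η) :
    ∃ R, 0 ≤ R ∧ ∀ x, R ≤ |x| → |f x| * ρ x < η := by
  obtain ⟨-, h1, h2⟩ := hf
  rw [Metric.tendsto_nhds] at h1 h2
  obtain ⟨R1, hR1⟩ := eventually_atTop.1 (h1 η hη)
  obtain ⟨R2, hR2⟩ := eventually_atBot.1 (h2 η hη)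
  refine ⟨max 0 (max R1 (-R2)), le_max_left _ _, fun x hx => ?_⟩
  have e : |f x| * ρ x = dist (f x * ρ x) 0 := by
    rw [Real.dist_eq, sub_zero, abs_mul, abs_of_pos (hpos x)]
  rw [e]
  have m1 : R1 ≤ |x| := (le_max_left _ _).trans ((le_max_right _ _).trans hx)
  have m2 : -R2 ≤ |x| := (le_max_right _ _).trans ((le_max_right _ _).trans hx)
  rcases abs_cases x with ⟨h, -⟩ | ⟨h, -⟩
  · exact hR1 x (by linarith)
  · exact hR2 x (by linarith)

lemma cell_le {ρ : ℝ → ℝ} (hpos : ∀ x, 0 < ρ x)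
    (hfloor : ∀ x : ℝ, ρ x = ρ ((⌊x⌋ : ℤ) : ℝ)) {M : ℝ} (hM : 1 ≤ M)
    (hstep : ∀ x, ρ x ≤ M * ρ (x + 1)) {k : ℤ} {y : ℝ} (h1 : (k : ℝ) ≤ y)
    (h2 : y ≤ k + 1) : ρ k ≤ M * ρ y := by
  rcases h2.lt_or_eq with h | h
  · have : ⌊y⌋ = k := Int.floor_eq_iff.2 ⟨h1, h⟩
    rw [hfloor y, this]
    nlinarith [hpos k]
  · rw [h]
    exact hstep k

lemma decay_cell {ρ : ℝ → ℝ} (hρ : Admissible ρ)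
    (hfloor : ∀ x : ℝ, ρ x = ρ ((⌊x⌋ : ℤ) : ℝ)) {f : ℝ → ℝ} (hf : MemC0rho ρ f) {η : ℝ}
    (hη : 0 < η) : ∃ R, 0 ≤ R ∧ ∀ x y, R ≤ |x| → (⌊x⌋ : ℝ) ≤ y → y ≤ ⌊x⌋ + 1 →
      |f y| * ρ x < η := by
  have hpos := hρ.2.1
  obtain ⟨M, hM, hstep⟩ := exists_step hρ
  obtain ⟨R, hR0, hR⟩ := decay hpos hf (div_pos hη (by positivity : 0 < M))
  refine ⟨R + 1, by linarith, fun x y hx h1 h2 => ?_⟩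
  have hy : R ≤ |y| := by
    have hd : |x - y| ≤ 1 := by
      have := Int.floor_le x
      have := Int.lt_floor_add_one x
      rw [abs_le]; constructor <;> linarith
    have := abs_sub_abs_le_abs_sub x y
    linarith
  have h3 := hR y hy
  have h4 := cell_le hpos hfloor hM hstep h1 h2
  rw [← hfloor] at h4
  rw [lt_div_iff₀ (by positivity)] at h3
  nlinarith [mul_le_mul_of_nonneg_left h4 (abs_nonneg (f y))]

/-- Weighted uniform continuity of `f` within the unit cells `[k, k+1]`. -/
lemma weighted_unif {ρ : ℝ → ℝ} (hρ : Admissible ρ)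
    (hfloor : ∀ x : ℝ, ρ x = ρ ((⌊x⌋ : ℤ) : ℝ)) {f : ℝ → ℝ} (hf : MemC0rho ρ f) {ε : ℝ}
    (hε : 0 < ε) : ∃ N : ℕ, ∀ x y, |y - x| ≤ 1 / 2 ^ N → (⌊x⌋ : ℝ) ≤ y → y ≤ ⌊x⌋ + 1 →
      |f y - f x| * ρ x ≤ ε := by
  have hpos := hρ.2.1
  obtain ⟨R, hR0, hR⟩ := decay_cell hρ hfloor hf (half_pos hε)
  obtain ⟨A, B, hA, hB, hAB⟩ := exists_bounds hρ R
  have huc : UniformContinuousOn f (Set.Icc (-(R + 1)) (R + 1)) :=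
    isCompact_Icc.uniformContinuousOn_of_continuous hf.1.continuousOn
  rw [Metric.uniformContinuousOn_iff] at huc
  obtain ⟨δ, hδ, hδf⟩ := huc (ε / B) (div_pos hε hB)
  obtain ⟨N, hN⟩ := exists_pow_lt_of_lt_one hδ (by norm_num : (1 / 2 : ℝ) < 1)
  rw [one_div_pow] at hN
  refine ⟨N, fun x y hxy h1 h2 => ?_⟩
  rcases le_or_gt R |x| with hx | hx
  · have q1 := hR x y hx h1 h2
    have q2 := hR x x hx (Int.floor_le x) (Int.lt_floor_add_one x).le
    have q3 := mul_le_mul_of_nonneg_right (abs_sub (f y) (f x)) (hpos x).le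
    linarith
  · have hx' := abs_lt.1 hx
    have f1 := Int.floor_le x
    have f2 := Int.lt_floor_add_one x
    have q := hδf y ⟨by linarith, by linarith⟩ x ⟨by linarith, by linarith⟩
      (by rw [Real.dist_eq]; linarith)
    rw [Real.dist_eq, lt_div_iff₀ hB] at q
    exact (mul_le_mul_of_nonneg_left (hAB x hx.le).2 (abs_nonneg _)).trans q.le

lemma interp_close {ρ : ℝ → ℝ} (hρ : Admissible ρ)
    (hfloor : ∀ x : ℝ, ρ x = ρ ((⌊x⌋ : ℤ) : ℝ)) {f : ℝ → ℝ} (hf : MemC0rho ρ f) {ε : ℝ}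
    (hε : 0 < ε) : ∃ N : ℕ, ∀ x, |interp f N x - f x| * ρ x ≤ ε := by
  obtain ⟨N, hN⟩ := weighted_unif hρ hfloor hf hε
  refine ⟨N, fun x => ?_⟩
  have h0 := Int.fract_nonneg ((2 : ℝ) ^ N * x)
  have h1 := Int.fract_lt_one ((2 : ℝ) ^ N * x)
  have hs := Int.self_sub_floor ((2 : ℝ) ^ N * x)
  have hp : (0 : ℝ) < 2 ^ N := by positivity
  have f1 : (⌊x⌋ : ℝ) * 2 ^ N ≤ ⌊(2 : ℝ) ^ N * x⌋ := by
    have : ⌊x⌋ * 2 ^ N ≤ ⌊(2 : ℝ) ^ N * x⌋ := by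
      rw [Int.le_floor]; push_cast
      have := Int.floor_le x
      nlinarith
    exact_mod_cast this
  have f2 : (⌊(2 : ℝ) ^ N * x⌋ : ℝ) + 1 ≤ (⌊x⌋ + 1) * 2 ^ N := by
    have : ⌊(2 : ℝ) ^ N * x⌋ < (⌊x⌋ + 1) * 2 ^ N := by
      rw [Int.floor_lt]; push_cast
      have := Int.lt_floor_add_one x
      nlinarith
    exact_mod_cast this
  rw [interp]
  set j : ℝ := (⌊(2 : ℝ) ^ N * x⌋ : ℝ)
  set t := Int.fract ((2 : ℝ) ^ N * x)
  have e1 : j / 2 ^ N - x = -t / 2 ^ N := by rw [← hs]; field_simp; ring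
  have e2 : (j + 1) / 2 ^ N - x = (1 - t) / 2 ^ N := by rw [← hs]; field_simp; ring
  have g1 := hN x (j / 2 ^ N)
    (by rw [e1, abs_div, abs_of_pos hp, abs_neg, abs_of_nonneg h0]; gcongr)
    (by rw [le_div_iff₀ hp]; exact f1) (by rw [div_le_iff₀ hp]; linarith)
  have g2 := hN x ((j + 1) / 2 ^ N)
    (by rw [e2, abs_div, abs_of_pos hp, abs_of_nonneg (by linarith)]; gcongr; linarith)
    (by rw [le_div_iff₀ hp]; linarith) (by rw [div_le_iff₀ hp]; exact f2)
  have e3 : (1 - t) * f (j / 2 ^ N) + t * f ((j + 1) / 2 ^ N) - f x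
      = (1 - t) * (f (j / 2 ^ N) - f x) + t * (f ((j + 1) / 2 ^ N) - f x) := by ring
  rw [e3]
  have g3 := abs_add_le ((1 - t) * (f (j / 2 ^ N) - f x)) (t * (f ((j + 1) / 2 ^ N) - f x))
  rw [abs_mul, abs_mul, abs_of_nonneg h0, abs_of_nonneg (by linarith : 0 ≤ 1 - t)] at g3
  have g4 := mul_le_mul_of_nonneg_right g3 (hρ.2.1 x).le
  have g5 := mul_le_mul_of_nonneg_left g1 (by linarith : 0 ≤ 1 - t)
  have g6 := mul_le_mul_of_nonneg_left g2 h0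
  nlinarith

open Classical in
/-- The family in `c₀(ℤ+D̃)`, supported on level `n`, whose image under `P` is the level-`n` part
of the Faber–Schauder expansion of `f`. -/
noncomputable def single (ρ f : ℝ → ℝ) (n : ℕ) (c : ℝ) : ℝ :=
  if c ∈ SZDlevel n then 2 ^ n * ρ ((⌊c⌋ : ℤ) : ℝ) * schauderCoeff f n c else 0

lemma schauderCoeff_small {ρ : ℝ → ℝ} (hρ : Admissible ρ)
    (hfloor : ∀ x : ℝ, ρ x = ρ ((⌊x⌋ : ℤ) : ℝ)) {f : ℝ → ℝ} (hf : MemC0rho ρ f) (n : ℕ)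
    {η : ℝ} (hη : 0 < η) :
    ∃ R, ∀ c ∈ SZDlevel n, R ≤ |c| → |schauderCoeff f n c| * ρ c < η := by
  obtain ⟨R, hR0, hR⟩ := decay_cell hρ hfloor hf (half_pos hη)
  refine ⟨R, fun c hc hcR => ?_⟩
  have q := hR c c hcR (Int.floor_le c) (Int.lt_floor_add_one c).le
  cases n with
  | zero => rw [schauderCoeff]; linarith
  | succ n =>
    obtain ⟨m, hm⟩ := (mem_level_succ n c).1 hc
    have hp : (0 : ℝ) < 2 ^ (n + 1) := by positivity
    have l1 : (⌊c⌋ : ℝ) * 2 ^ (n + 1) ≤ 2 * m + 1 := by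
      rw [← le_div_iff₀ hp, ← hm]; exact Int.floor_le c
    have l2 : 2 * (m : ℝ) + 1 < (⌊c⌋ + 1) * 2 ^ (n + 1) := by
      rw [← div_lt_iff₀ hp, ← hm]; exact Int.lt_floor_add_one c
    -- the neighbouring nodes `c ± 2⁻⁽ⁿ⁺¹⁾` stay in the closed unit cell of `c`, by integrality
    have l1' : (⌊c⌋ : ℝ) * 2 ^ (n + 1) ≤ 2 * m := by
      have a1 : ⌊c⌋ * 2 ^ (n + 1) ≤ 2 * m + 1 := by exact_mod_cast l1
      have a2 : ⌊c⌋ * 2 ^ (n + 1) = 2 * (⌊c⌋ * 2 ^ n) := by ring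
      have a3 : ⌊c⌋ * 2 ^ (n + 1) ≤ 2 * m := by omega
      exact_mod_cast a3
    have l2' : 2 * (m : ℝ) + 2 ≤ (⌊c⌋ + 1) * 2 ^ (n + 1) := by
      have a1 : 2 * m + 1 < (⌊c⌋ + 1) * 2 ^ (n + 1) := by exact_mod_cast l2
      have a3 : 2 * m + 2 ≤ (⌊c⌋ + 1) * 2 ^ (n + 1) := by omega
      exact_mod_cast a3
    have e1 : c - 1 / 2 ^ (n + 1) = 2 * m / 2 ^ (n + 1) := by rw [hm]; field_simp; ring
    have e2 : c + 1 / 2 ^ (n + 1) = (2 * m + 2) / 2 ^ (n + 1) := by rw [hm]; field_simp; ring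
    have q1 := hR c (c - 1 / 2 ^ (n + 1)) hcR (by rw [e1, le_div_iff₀ hp]; exact l1')
      (by rw [e1, div_le_iff₀ hp]; linarith)
    have q2 := hR c (c + 1 / 2 ^ (n + 1)) hcR (by rw [e2, le_div_iff₀ hp]; linarith)
      (by rw [e2, div_le_iff₀ hp]; exact l2')
    rw [schauderCoeff]
    have s1 := abs_sub (f c) ((f (c - 1 / 2 ^ (n + 1)) + f (c + 1 / 2 ^ (n + 1))) / 2)
    rw [abs_div, abs_of_pos (by norm_num : (0 : ℝ) < 2)] at s1
    have s2 := abs_add_le (f (c - 1 / 2 ^ (n + 1))) (f (c + 1 / 2 ^ (n + 1)))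
    have s3 : |f c - (f (c - 1 / 2 ^ (n + 1)) + f (c + 1 / 2 ^ (n + 1))) / 2| ≤
      |f c| + (|f (c - 1 / 2 ^ (n + 1))| + |f (c + 1 / 2 ^ (n + 1))|) / 2 := by linarith
    have s4 := mul_le_mul_of_nonneg_right s3 (hρ.2.1 c).le
    linarith

lemma single_mem {ρ : ℝ → ℝ} (hρ : Admissible ρ)
    (hfloor : ∀ x : ℝ, ρ x = ρ ((⌊x⌋ : ℤ) : ℝ)) {f : ℝ → ℝ} (hf : MemC0rho ρ f) (n : ℕ) :
    Memc0S (single ρ f n) := by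
  refine ⟨fun x hx => if_neg fun h => hx (level_subset n h), fun ε hε => ?_⟩
  have hp : (0 : ℝ) < 2 ^ n := by positivity
  obtain ⟨R, hR⟩ := schauderCoeff_small hρ hfloor hf n (div_pos hε hp)
  refine (level_finite n (-R) R).subset fun c hc => ?_
  rw [Set.mem_ofPred_eq, single] at hc
  split_ifs at hc with hm
  · refine ⟨hm, abs_le.1 ?_⟩
    by_contra hcon
    have h := hR c hm (not_le.1 hcon).le
    rw [lt_div_iff₀ hp] at h
    rw [← hfloor, abs_mul, abs_mul, abs_of_pos hp, abs_of_pos (hρ.2.1 c)] at hc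
    linarith
  · rw [abs_zero] at hc; linarith

lemma Pop_single (ρ f : ℝ → ℝ) (n : ℕ) (x : ℝ) :
    Pop ρ (single ρ f n) x = 1 / 2 ^ n * lvl ρ (single ρ f n) n x := by
  rw [Pop_eq, tsum_eq_single n]
  intro m hm
  have h : ∀ c ∈ SZDlevel m, single ρ f n c = 0 := fun c hc => if_neg (level_disjoint hm hc)
  rw [lvl, finsum_mem_eq_zero_of_forall_eq_zero, mul_zero]
  intro c hc
  rw [h c hc, zero_div, zero_mul]

lemma Pop_single_zero {ρ : ℝ → ℝ} (hpos : ∀ x, 0 < ρ x) (f : ℝ → ℝ) (x : ℝ) :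
    Pop ρ (single ρ f 0) x = interp f 0 x := by
  have r1 := (hpos ⌊x⌋).ne'
  have r2 := (hpos (⌊x⌋ + 1)).ne'
  have m1 : (⌊x⌋ : ℝ) ∈ SZDlevel 0 := (mem_level_zero _).2 ⟨_, rfl⟩
  have m2 : (⌊x⌋ : ℝ) + 1 ∈ SZDlevel 0 := (mem_level_zero _).2 ⟨⌊x⌋ + 1, by push_cast; rfl⟩
  rw [Pop_single, interp_zero, lvl_zero, single, if_pos m1, single, if_pos m2, Int.floor_add_one,
    Int.floor_intCast, schauderCoeff, schauderCoeff]
  push_cast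
  field_simp

lemma Pop_single_succ {ρ : ℝ → ℝ} (hpos : ∀ x, 0 < ρ x) (f : ℝ → ℝ) (n : ℕ) (x : ℝ) :
    Pop ρ (single ρ f (n + 1)) x =
      schauderCoeff f (n + 1) (mid n x) * (1 - |2 * Int.fract ((2 : ℝ) ^ n * x) - 1|) := by
  have r1 := (hpos ⌊x⌋).ne'
  rw [Pop_single, lvl_succ, single, if_pos (mid_mem n x), floor_mid]
  field_simp

lemma Memc0S.add {a b : ℝ → ℝ} (ha : Memc0S a) (hb : Memc0S b) :
    Memc0S fun y => a y + 1 * b y := by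
  refine ⟨fun x hx => by simp [ha.1 x hx, hb.1 x hx], fun ε hε => ?_⟩
  refine ((ha.2 _ (half_pos hε)).union (hb.2 _ (half_pos hε))).subset fun x hx => ?_
  by_contra hcon
  simp only [Set.mem_union, Set.mem_ofPred_eq, not_or, not_le, one_mul] at hcon hx
  have := abs_add_le (a x) (b x)
  linarith

/-- Every dyadic piecewise linear interpolant lies in the range of `P`. -/
lemma interp_in_range {ρ : ℝ → ℝ} (hρ : Admissible ρ)
    (hfloor : ∀ x : ℝ, ρ x = ρ ((⌊x⌋ : ℤ) : ℝ)) {f : ℝ → ℝ} (hf : MemC0rho ρ f) (N : ℕ) :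
    ∃ a, Memc0S a ∧ ∀ x, Pop ρ a x = interp f N x := by
  induction N with
  | zero => exact ⟨_, single_mem hρ hfloor hf 0, Pop_single_zero hρ.2.1 f⟩
  | succ N ih =>
    obtain ⟨a, ha, hP⟩ := ih
    have hb := single_mem hρ hfloor hf (N + 1)
    refine ⟨_, ha.add hb, fun x => ?_⟩
    rw [Pop_linear hρ hfloor ha hb, hP, Pop_single_succ hρ.2.1, interp_succ, one_mul]

/-- for `ρ` admissible with `ρ(x) = ρ(⌊x⌋)`, the series defining `P`
converges uniformly on compact sets, `P` maps `c₀(ℤ+D̃)` into `C₀^ρ(ℝ)`, is linear and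
continuous, has dense range, and intertwines `B_w` with the translation `T₁`;
in particular `B_w` is quasiconjugate to `T₁`. -/
theorem Pop_quasiconjugates_shift_to_translation
    (ρ : ℝ → ℝ) (hρ : Admissible ρ)
    (hfloor : ∀ x : ℝ, ρ x = ρ ((⌊x⌋ : ℤ) : ℝ)) :
    (∀ a : ℝ → ℝ, Memc0S a → ∀ K : Set ℝ, IsCompact K →
        TendstoUniformlyOn (fun N x => PopPartial ρ a N x) (Pop ρ a) atTop K) ∧
    (∀ a : ℝ → ℝ, Memc0S a → MemC0rho ρ (Pop ρ a)) ∧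
    (∀ a b : ℝ → ℝ, Memc0S a → Memc0S b → ∀ c : ℝ, ∀ x : ℝ,
        Pop ρ (fun y => a y + c * b y) x = Pop ρ a x + c * Pop ρ b x) ∧
    (∃ C : ℝ, 0 < C ∧ ∀ a : ℝ → ℝ, Memc0S a → ∀ x : ℝ,
        |Pop ρ a x| * ρ x ≤ C * ⨆ y : ℝ, |a y|) ∧
    (∀ f : ℝ → ℝ, MemC0rho ρ f → ∀ ε : ℝ, 0 < ε →
        ∃ a : ℝ → ℝ, Memc0S a ∧ ∀ x : ℝ, |Pop ρ a x - f x| * ρ x ≤ ε) ∧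
    (∀ a : ℝ → ℝ, Memc0S a → ∀ x : ℝ, Pop ρ (BwOpS ρ a) x = Pop ρ a (x + 1)) := by
  have hpos := hρ.2.1
  obtain ⟨M, hM, hstep⟩ := exists_step hρ
  refine ⟨fun a ha K hK => tendstoUniformlyOn_Pop hρ hfloor ha hK,
    fun a ha => Pop_mem hρ hfloor ha,
    fun a b ha hb c x => Pop_linear hρ hfloor ha hb c x,
    ⟨2 * M, by positivity, fun a ha x => ?_⟩, fun f hf ε hε => ?_, fun a _ x => ?_⟩
  · have hB := bddAbove_of_mem ha
    exact Pop_bound hpos hfloor hM hstep a (Real.iSup_nonneg fun y => abs_nonneg (a y)) x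
      fun c _ => le_ciSup hB c
  · obtain ⟨N, hN⟩ := interp_close hρ hfloor hf hε
    obtain ⟨a, ha, hP⟩ := interp_in_range hρ hfloor hf N
    exact ⟨a, ha, fun x => by rw [hP]; exact hN x⟩
  · rw [Pop_eq, Pop_eq]
    exact tsum_congr fun n => by rw [lvl_shift hpos]
end

section
/- Let ρ be an admissible weight function on ℝ with sup_{k∈ℤ} ρ(k+1)/ρ(k) < ∞. Then the translation semigroup (T_t)_{t≥0} is frequently hypercyclic on C₀^ρ(ℝ) if and only if there exist a sequence (M(p))_{p∈ℕ} of positive real numbers tending to ∞ and a sequence (E_p)_{p∈ℕ} of subsets of ℕ such that: (a) for any p ≥ 1, ldens(E_p) > 0; (b) for any distinct p, q ≥ 1, (E_p + {−p,…,p}) ∩ (E_q + {−q,…,q}) = ∅; (c) for any p ≥ 1, lim_{n→∞, n∈E_p} ρ(n) = 0; (d) for any p, q ≥ 1 and any n ∈ E_p, m ∈ E_q with m ≠ n, ρ(m−n) ≤ 1/(M(p)M(q)). Moreover, these conditions hold for some sequence (M(p))_{p∈ℕ} tending to ∞ if and only if for every sequence (M(p))_{p∈ℕ} of positive reals tending to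 ∞ there exists a sequence (E_p)_{p∈ℕ} satisfying (a)–(d). -/
/-!
The hypotheses on `ρ` make its values at points at distance at most `1` comparable up to a constant
`K` (`weight_comparable`), so that real times and positions may be rounded to integers.

If `f` is frequently hypercyclic, consider the times `t` at which `T_t f` is very close to the
function equal to `p` on `[-(p+1), p+1]` and vanishing outside `[-(p+2), p+2]`. At such times `f` is
almost the constant `p` around `t`, so times belonging to different `p`, `q` are far apart, and
`ρ t → 0` because `f t * ρ t → 0`. If `s` is a time belonging to `q` and `|s - t| ≥ p + 2`, then
evaluating the approximation for `t` at `s - t`, where the target vanishes, bounds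
`(q - 1/4) * ρ (s - t)` by the chosen precision. Rounding the times to integers and thinning them
out greedily, which keeps positive lower density (`ldens_greedy_floor`), gives the sets `E p` with
`M p = p + 1` (`cond_of_FH`).

Conversely, passing to a subsequence of `(E p)` gives the condition for any prescribed `M`
(`cond_of_cond`), which is also the last equivalence. Take a dense sequence `(G p)` in `C₀^ρ` with
`G p` supported in `[-p, p]` and every term recurring infinitely often, and let `M p` dominate
`‖G p‖ * K ^ p`. Then the intervals `[n - p, n + p]`, `n ∈ E p`, are disjoint: for distinct `p` this
is (b), and within one `E p` it follows from (d), since `ρ` cannot be that small near `0`. The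
function `f` equal to `G p (· - n)` on each of these intervals (`exists_glue`) belongs to `C₀^ρ`,
and by (d) its translate by `m ∈ E p` is within `1 / M p` of `G p`; uniform continuity extends the
approximation to a short time interval after `m` (`FH_of_cond`).
-/


open Filter MeasureTheory

/-- The lower density of a measurable set `M ⊆ [0,∞)`. -/
noncomputable def ldensR (M : Set ℝ) : ℝ :=
  atTop.liminf fun N : ℝ => (volume (M ∩ Set.Icc 0 N)).toReal / N

/-- Frequent hypercyclicity of the translation semigroup on `C₀^ρ(ℝ)`. -/
def FHTransC0 (ρ : ℝ → ℝ) : Prop :=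
  ∃ f : ℝ → ℝ, MemC0rho ρ f ∧ ∀ g : ℝ → ℝ, MemC0rho ρ g → ∀ ε : ℝ, 0 < ε →
    0 < ldensR {t : ℝ | 0 ≤ t ∧ ∀ x : ℝ, |f (x + t) - g x| * ρ x ≤ ε}

/-- Conditions (a)–(d) of STATEMENT 4:
(a) each `E_p` (`p ≥ 1`) has positive lower density;
(b) for distinct `p, q ≥ 1`, `(E_p + ⟦-p,p⟧) ∩ (E_q + ⟦-q,q⟧) = ∅`;
(c) `ρ(n) → 0` as `n → ∞` along `E_p`;
(d) for `n ∈ E_p`, `m ∈ E_q` with `m ≠ n`, `ρ(m - n) ≤ 1/(M(p)M(q))`. -/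
def Cond4 (ρ : ℝ → ℝ) (M : ℕ → ℝ) (E : ℕ → Set ℕ) : Prop :=
  (∀ p : ℕ, 1 ≤ p → 0 < ldens (E p)) ∧
  (∀ p q : ℕ, 1 ≤ p → 1 ≤ q → p ≠ q → ∀ n ∈ E p, ∀ m ∈ E q,
      ∀ j k : ℤ, |j| ≤ (p : ℤ) → |k| ≤ (q : ℤ) → (n : ℤ) + j ≠ (m : ℤ) + k) ∧
  (∀ p : ℕ, 1 ≤ p →
      Tendsto (fun n : ℕ => ρ (n : ℝ)) (atTop ⊓ Filter.principal (E p)) (nhds 0)) ∧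
  (∀ p q : ℕ, 1 ≤ p → 1 ≤ q → ∀ n ∈ E p, ∀ m ∈ E q, m ≠ n →
      ρ ((m : ℝ) - (n : ℝ)) ≤ 1 / (M p * M q))

/-! ### Weights and densities -/

/-- Values of the weight at points at distance at most `1` are comparable: admissibility bounds
`ρ x` by later values, and the bound on `ρ (k + 1) / ρ k` allows moving back along the integers. -/
lemma weight_comparable {ρ : ℝ → ℝ} (hρ : Admissible ρ)
    (hsup : ∃ C : ℝ, ∀ k : ℤ, ρ ((k : ℝ) + 1) / ρ (k : ℝ) ≤ C) :
    ∃ K : ℝ, 1 ≤ K ∧ ∀ x y : ℝ, |x - y| ≤ 1 → ρ x ≤ K * ρ y := by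
  obtain ⟨-, hpos, M, hM, ω, hMω⟩ := hρ
  obtain ⟨C₀, hC₀⟩ := hsup
  set C := max C₀ 1 with hC
  have hC1 : 1 ≤ C := le_max_right _ _
  have hCk : ∀ k : ℤ, ρ ((k : ℝ) + 1) ≤ C * ρ k := fun k =>
    ((div_le_iff₀ (hpos _)).1 ((hC₀ k).trans (le_max_left _ _)))
  set A := M * Real.exp (|ω| * 4) with hA
  have hA1 : 1 ≤ A := by
    have : 1 ≤ Real.exp (|ω| * 4) := Real.one_le_exp (by positivity)
    nlinarith
  have hforw : ∀ x y : ℝ, x < y → y ≤ x + 4 → ρ x ≤ A * ρ y := by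
    intro x y h1 h2
    have h := hMω x (y - x) (by linarith)
    rw [add_sub_cancel] at h
    refine h.trans (mul_le_mul_of_nonneg_right ?_ (hpos _).le)
    refine mul_le_mul_of_nonneg_left (Real.exp_le_exp.2 ?_) (by linarith)
    calc ω * (y - x) ≤ |ω| * (y - x) :=
          mul_le_mul_of_nonneg_right (le_abs_self _) (by linarith)
      _ ≤ |ω| * 4 := mul_le_mul_of_nonneg_left (by linarith) (abs_nonneg _)
  refine ⟨A * (C * (C * (C * A))), ?_, fun x y hxy => ?_⟩
  · have h1 : 1 ≤ C * A := one_le_mul_of_one_le_of_one_le hC1 hA1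
    have h2 : 1 ≤ C * (C * A) := one_le_mul_of_one_le_of_one_le hC1 h1
    have h3 : 1 ≤ C * (C * (C * A)) := one_le_mul_of_one_le_of_one_le hC1 h2
    exact one_le_mul_of_one_le_of_one_le hA1 h3
  · rw [abs_le] at hxy
    have hf1 := Int.floor_le x
    have hf2 := Int.lt_floor_add_one x
    have h0 : ρ x ≤ A * ρ ((⌊x⌋ : ℝ) + 1) := hforw _ _ hf2 (by linarith)
    have h1 := hCk ⌊x⌋
    have h2 := hCk (⌊x⌋ - 1)
    have h3 := hCk (⌊x⌋ - 2)
    push_cast at h2 h3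
    rw [show (⌊x⌋ : ℝ) - 1 + 1 = ⌊x⌋ by ring] at h2
    rw [show (⌊x⌋ : ℝ) - 2 + 1 = ⌊x⌋ - 1 by ring] at h3
    have h4 : ρ ((⌊x⌋ : ℝ) - 2) ≤ A * ρ y := hforw _ _ (by linarith) (by linarith)
    have hA0 : 0 ≤ A := by linarith
    have hC0 : 0 ≤ C := by linarith
    calc ρ x ≤ A * ρ ((⌊x⌋ : ℝ) + 1) := h0
      _ ≤ A * (C * (C * (C * (A * ρ y)))) := by
          refine mul_le_mul_of_nonneg_left (h1.trans ?_) hA0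
          refine mul_le_mul_of_nonneg_left (h2.trans ?_) hC0
          refine mul_le_mul_of_nonneg_left (h3.trans ?_) hC0
          exact mul_le_mul_of_nonneg_left h4 hC0
      _ = _ := by ring

lemma weight_comparable_nat {ρ : ℝ → ℝ} {K : ℝ} (hK : 1 ≤ K)
    (h : ∀ x y : ℝ, |x - y| ≤ 1 → ρ x ≤ K * ρ y) :
    ∀ (n : ℕ) (x y : ℝ), |x - y| ≤ n → ρ x ≤ K ^ n * ρ y := by
  intro n
  induction n with
  | zero =>
    intro x y hxy
    have : x = y := by
      rw [Nat.cast_zero, abs_nonpos_iff] at hxy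
      linarith
    simp [this]
  | succ n ih =>
    intro x y hxy
    have hn : (0 : ℝ) < n + 1 := by positivity
    push_cast at hxy
    have hd : |(x - y) / (n + 1)| ≤ 1 := by
      rw [abs_div, abs_of_pos hn, div_le_one hn]; exact hxy
    have h1 := h x (x - (x - y) / (n + 1)) (by rwa [sub_sub_cancel])
    have h2 := ih (x - (x - y) / (n + 1)) y (by
      have : x - (x - y) / (n + 1) - y = n * ((x - y) / (n + 1)) := by field_simp; ring
      rw [this, abs_mul, Nat.abs_cast]
      exact mul_le_of_le_one_right (by positivity) hd)
    calc ρ x ≤ K * ρ (x - (x - y) / (n + 1)) := h1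
      _ ≤ K * (K ^ n * ρ y) := mul_le_mul_of_nonneg_left h2 (by linarith)
      _ = _ := by ring

lemma ldens_pos_iff (A : Set ℕ) :
    0 < ldens A ↔ ∃ c : ℝ, 0 < c ∧ ∀ᶠ N : ℕ in atTop, c * N ≤ ((A ∩ Set.Iic N).ncard : ℝ) := by
  constructor
  · intro h
    obtain ⟨c, hc0, hc⟩ := exists_between h
    refine ⟨c, hc0, ?_⟩
    have := eventually_lt_of_lt_liminf hc
      (isBoundedUnder_of ⟨0, fun N => by positivity⟩)
    filter_upwards [this, eventually_gt_atTop 0] with N hN hN0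
    have : (0 : ℝ) < N := by exact_mod_cast hN0
    exact ((lt_div_iff₀ this).1 hN).le
  · rintro ⟨c, hc0, hc⟩
    refine lt_of_lt_of_le hc0 (le_liminf_of_le ?_ ?_)
    · refine IsBoundedUnder.isCoboundedUnder_ge ?_
      refine isBoundedUnder_of_eventually_le (a := 2) ?_
      filter_upwards [eventually_gt_atTop 0] with N hN0
      have h0 : (0 : ℝ) < N := by exact_mod_cast hN0
      rw [div_le_iff₀ h0]
      have h1 : (A ∩ Set.Iic N).ncard ≤ N + 1 := by
        have := Set.ncard_le_ncard (Set.inter_subset_right (s := A) (t := Set.Iic N))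
          (Set.finite_Iic N)
        simpa [Set.ncard_eq_toFinset_card'] using this
      have : ((A ∩ Set.Iic N).ncard : ℝ) ≤ N + 1 := by exact_mod_cast h1
      have : (1 : ℝ) ≤ N := by exact_mod_cast hN0
      linarith
    · filter_upwards [hc, eventually_gt_atTop 0] with N hN hN0
      have : (0 : ℝ) < N := by exact_mod_cast hN0
      exact (le_div_iff₀ this).2 hN

lemma volume_inter_Icc_ne_top (S : Set ℝ) (N : ℝ) : volume (S ∩ Set.Icc 0 N) ≠ ⊤ :=
  ((measure_mono Set.inter_subset_right).trans_lt (by simp)).ne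

lemma ldensR_pos_iff (S : Set ℝ) :
    0 < ldensR S ↔
      ∃ c : ℝ, 0 < c ∧ ∀ᶠ N : ℝ in atTop, c * N ≤ (volume (S ∩ Set.Icc 0 N)).toReal := by
  constructor
  · intro h
    obtain ⟨c, hc0, hc⟩ := exists_between h
    refine ⟨c, hc0, ?_⟩
    have := eventually_lt_of_lt_liminf hc (isBoundedUnder_of_eventually_ge (a := 0) (by
      filter_upwards [eventually_gt_atTop 0] with N hN
      positivity))
    filter_upwards [this, eventually_gt_atTop 0] with N hN hN0
    exact ((lt_div_iff₀ hN0).1 hN).le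
  · rintro ⟨c, hc0, hc⟩
    refine lt_of_lt_of_le hc0 (le_liminf_of_le ?_ ?_)
    · refine IsBoundedUnder.isCoboundedUnder_ge ?_
      refine isBoundedUnder_of_eventually_le (a := 1) ?_
      filter_upwards [eventually_gt_atTop 0] with N hN0
      rw [div_le_iff₀ hN0]
      have := ENNReal.toReal_mono (by simp)
        (measure_mono (μ := volume) (Set.inter_subset_right (s := S) (t := Set.Icc 0 N)))
      rw [Real.volume_Icc, ENNReal.toReal_ofReal (by linarith)] at this
      linarith
    · filter_upwards [hc, eventually_gt_atTop 0] with N hN hN0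
      exact (le_div_iff₀ hN0).2 hN

/-- A set of reals containing an interval of fixed length to the right of each element of a set
of integers of positive lower density has itself positive lower density. -/
lemma ldensR_pos_of_ldens {E : Set ℕ} (hE : 0 < ldens E) {S : Set ℝ} {δ : ℝ} (hδ : 0 < δ)
    (hδ1 : δ ≤ 1) (hS : ∀ m ∈ E, ∀ s : ℝ, 0 ≤ s → s ≤ δ → (m : ℝ) + s ∈ S) : 0 < ldensR S := by
  obtain ⟨c, hc0, hc⟩ := (ldens_pos_iff E).1 hE
  refine (ldensR_pos_iff S).2 ⟨δ * c / 2, by positivity, ?_⟩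
  have hfl : Tendsto (fun N : ℝ => ⌊N⌋₊ - 1) atTop atTop :=
    (tendsto_sub_atTop_nat 1).comp tendsto_nat_floor_atTop
  filter_upwards [hfl.eventually hc, eventually_ge_atTop 4] with N hN hN4
  have hfin : (E ∩ Set.Iic (⌊N⌋₊ - 1)).Finite := (Set.finite_Iic _).inter_of_right _
  have hfl1 : 1 ≤ ⌊N⌋₊ := Nat.le_floor (by push_cast; linarith)
  have hfl2 : N < ⌊N⌋₊ + 1 := Nat.lt_floor_add_one N
  have hfl3 : (⌊N⌋₊ : ℝ) ≤ N := Nat.floor_le (by linarith)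
  have hsub : (⋃ m ∈ hfin.toFinset, Set.Ico (m : ℝ) (m + δ)) ⊆ S ∩ Set.Icc 0 N := by
    intro x hx
    simp only [Set.mem_iUnion, Set.Finite.mem_toFinset] at hx
    obtain ⟨m, ⟨hmE, hmN⟩, hx1, hx2⟩ := hx
    refine ⟨?_, le_trans (by positivity) hx1, ?_⟩
    · have := hS m hmE (x - m) (by linarith) (by linarith)
      rwa [add_sub_cancel] at this
    · have : m + 1 ≤ ⌊N⌋₊ := by rw [Set.mem_Iic] at hmN; omega
      have : (m : ℝ) + 1 ≤ ⌊N⌋₊ := by exact_mod_cast this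
      linarith
  have hvol : volume (⋃ m ∈ hfin.toFinset, Set.Ico (m : ℝ) (m + δ))
      = (hfin.toFinset.card : ENNReal) * ENNReal.ofReal δ := by
    rw [measure_biUnion_finset]
    · simp
    · intro a _ b _ hab
      refine Set.disjoint_left.2 fun x hxa hxb => hab ?_
      have h1 : (a : ℝ) < b + 1 := by linarith [hxa.1, hxb.2]
      have h2 : (b : ℝ) < a + 1 := by linarith [hxb.1, hxa.2]
      have h1' : a < b + 1 := by exact_mod_cast h1
      have h2' : b < a + 1 := by exact_mod_cast h2
      omega
    · intro b _; exact measurableSet_Ico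
  have hle := ENNReal.toReal_mono (volume_inter_Icc_ne_top S N) (measure_mono (μ := volume) hsub)
  rw [hvol, ENNReal.toReal_mul, ENNReal.toReal_natCast, ENNReal.toReal_ofReal hδ.le,
    ← Set.ncard_eq_toFinset_card _ hfin] at hle
  refine le_trans ?_ hle
  rw [Nat.cast_sub hfl1, Nat.cast_one] at hN
  have : δ * (c * (⌊N⌋₊ - 1)) ≤ δ * ((E ∩ Set.Iic (⌊N⌋₊ - 1)).ncard : ℝ) :=
    mul_le_mul_of_nonneg_left hN hδ.le
  have h3 : N / 2 ≤ ⌊N⌋₊ - 1 := by linarith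
  have h4 : δ * c * (N / 2) ≤ δ * c * (⌊N⌋₊ - 1) :=
    mul_le_mul_of_nonneg_left h3 (by positivity)
  linarith

/-- A greedily chosen subset of `A`: a point of `A` is kept unless one of the `L - 1` preceding
integers has been kept. -/
def greedy (A : Set ℕ) (L : ℕ) (n : ℕ) : Prop :=
  n ∈ A ∧ ∀ m, m < n → n < m + L → ¬ greedy A L m
termination_by n

lemma greedy_mem {A : Set ℕ} {L n : ℕ} (h : greedy A L n) : n ∈ A := by
  rw [greedy] at h; exact h.1

lemma greedy_sep {A : Set ℕ} {L n m : ℕ} (hn : greedy A L n) (hm : greedy A L m) (h : m < n) :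
    m + L ≤ n := by
  rw [greedy] at hn
  by_contra hlt
  exact hn.2 m h (by omega) hm

lemma exists_greedy {A : Set ℕ} {L n : ℕ} (hL : 1 ≤ L) (hn : n ∈ A) :
    ∃ m, greedy A L m ∧ m ≤ n ∧ n < m + L := by
  by_cases h : greedy A L n
  · exact ⟨n, h, le_rfl, by omega⟩
  · have h' := h
    rw [greedy] at h'
    push Not at h'
    obtain ⟨m, hm1, hm2, hm3⟩ := h' hn
    exact ⟨m, hm3, hm1.le, hm2⟩

/-- Rounding the points of a set of positive lower density down to integers and thinning out
greedily leaves a set of integers of positive lower density. -/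
lemma ldens_greedy_floor {S : Set ℝ} (hS : 0 < ldensR S) {L : ℕ}
    (hL : 1 ≤ L) : 0 < ldens {n | greedy {n : ℕ | ∃ t ∈ S, (n : ℝ) ≤ t ∧ t < n + 1} L n} := by
  obtain ⟨c, hc0, hc⟩ := (ldensR_pos_iff S).1 hS
  set E := {n | greedy {n : ℕ | ∃ t ∈ S, (n : ℝ) ≤ t ∧ t < n + 1} L n} with hE
  have hL0 : (0 : ℝ) < L := by exact_mod_cast hL
  refine (ldens_pos_iff E).2 ⟨c / L, by positivity, ?_⟩
  filter_upwards [tendsto_natCast_atTop_atTop.eventually hc] with N hN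
  have hfin : (E ∩ Set.Iic N).Finite := (Set.finite_Iic _).inter_of_right _
  have hsub : S ∩ Set.Icc 0 (N : ℝ) ⊆ ⋃ m ∈ hfin.toFinset, Set.Icc (m : ℝ) (m + L) := by
    rintro t ⟨htS, ht0, htN⟩
    have hfl1 := Nat.floor_le ht0
    have hfl2 := Nat.lt_floor_add_one t
    obtain ⟨m, hm, hmn, hnm⟩ := exists_greedy (A := {n : ℕ | ∃ t ∈ S, (n : ℝ) ≤ t ∧ t < n + 1})
      hL (n := ⌊t⌋₊) ⟨t, htS, hfl1, hfl2⟩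
    have h1 : (m : ℝ) ≤ ⌊t⌋₊ := by exact_mod_cast hmn
    have h2 : (⌊t⌋₊ : ℝ) + 1 ≤ m + L := by exact_mod_cast hnm
    simp only [Set.mem_iUnion, Set.Finite.mem_toFinset]
    refine ⟨m, ⟨hm, ?_⟩, by linarith, by linarith⟩
    have : (m : ℝ) ≤ N := by linarith
    exact_mod_cast this
  have hvol : volume (⋃ m ∈ hfin.toFinset, Set.Icc (m : ℝ) (m + L))
      ≤ (hfin.toFinset.card : ENNReal) * L := by
    refine (measure_biUnion_finset_le _ _).trans ?_
    simp
  have hle := ENNReal.toReal_mono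
    (ENNReal.mul_ne_top (ENNReal.natCast_ne_top _) (ENNReal.natCast_ne_top _))
    ((measure_mono (μ := volume) hsub).trans hvol)
  rw [ENNReal.toReal_mul, ENNReal.toReal_natCast, ENNReal.toReal_natCast,
    ← Set.ncard_eq_toFinset_card _ hfin] at hle
  rw [div_mul_eq_mul_div, div_le_iff₀ hL0]
  exact hN.trans hle

/-! ### Frequent hypercyclicity implies the combinatorial condition -/

/-- The trapezoidal function equal to `p` on `[-(p+1), p+1]` and to `0` outside
`[-(p+2), p+2]`. -/
noncomputable def plateau (p : ℕ) (x : ℝ) : ℝ := p * max 0 (min 1 ((p : ℝ) + 2 - |x|))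

lemma plateau_eq {p : ℕ} {x : ℝ} (h : |x| ≤ (p : ℝ) + 1) : plateau p x = p := by
  rw [plateau, min_eq_left (by linarith), max_eq_right zero_le_one, mul_one]

lemma plateau_eq_zero {p : ℕ} {x : ℝ} (h : (p : ℝ) + 2 ≤ |x|) : plateau p x = 0 := by
  rw [plateau, max_eq_left ((min_le_right _ _).trans (by linarith)), mul_zero]

/-- A continuous function vanishing outside a bounded interval lies in `C₀^ρ`. -/
lemma memC0rho_of_bounded_support {ρ f : ℝ → ℝ} (hf : Continuous f) {R : ℝ}
    (h : ∀ x, R ≤ |x| → f x = 0) : MemC0rho ρ f := by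
  refine ⟨hf, ?_, ?_⟩
  · refine tendsto_const_nhds.congr' ?_
    filter_upwards [eventually_ge_atTop R] with x hx
    rw [h x (hx.trans (le_abs_self x)), zero_mul]
  · refine tendsto_const_nhds.congr' ?_
    filter_upwards [eventually_le_atBot (-R)] with x hx
    rw [h x (le_trans (by linarith) (neg_le_abs x)), zero_mul]

lemma plateau_mem (ρ : ℝ → ℝ) (p : ℕ) : MemC0rho ρ (plateau p) := by
  refine memC0rho_of_bounded_support ?_ fun x hx => plateau_eq_zero hx
  unfold plateau
  fun_prop

/-- The return-time sets of a frequently hypercyclic function `f` to small neighbourhoods of the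
plateau functions, rounded to integers and thinned out, satisfy the combinatorial condition. -/
lemma cond_of_FH {ρ : ℝ → ℝ} (hpos : ∀ x, 0 < ρ x) {K : ℝ} (hK : 1 ≤ K)
    (hK1 : ∀ x y : ℝ, |x - y| ≤ 1 → ρ x ≤ K * ρ y) (h : FHTransC0 ρ) :
    ∃ M : ℕ → ℝ, GoodM M ∧ ∃ E : ℕ → Set ℕ, Cond4 ρ M E := by
  obtain ⟨f, ⟨-, hftop, -⟩, hf⟩ := h
  have hKn := weight_comparable_nat hK hK1
  have hK0 : 0 < K := by linarith
  set ε : ℕ → ℝ := fun p => min (ρ 0 / K ^ (p + 1) / 4) (1 / (4 * K * (p + 1))) with hε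
  have hεpos : ∀ p, 0 < ε p := fun p => by
    have := hpos 0
    exact lt_min (by positivity) (by positivity)
  set F : ℕ → Set ℝ :=
    fun p => {t : ℝ | 0 ≤ t ∧ ∀ x : ℝ, |f (x + t) - plateau p x| * ρ x ≤ ε p} with hF
  have hFd : ∀ p, 0 < ldensR (F p) := fun p => hf _ (plateau_mem ρ p) _ (hεpos p)
  -- near a return time `t ∈ F p`, the function `f` is close to the constant `p`
  have hval : ∀ p t, t ∈ F p → ∀ y, |y - t| ≤ (p : ℝ) + 1 → |f y - p| ≤ 1 / 4 := by
    intro p t ht y hy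
    have h1 := ht.2 (y - t)
    rw [sub_add_cancel, plateau_eq hy] at h1
    have h2 : ρ 0 ≤ K ^ (p + 1) * ρ (y - t) := hKn _ _ _ (by
      rw [zero_sub, abs_neg]; push_cast; exact hy)
    have h3 : ε p ≤ ρ 0 / K ^ (p + 1) / 4 := min_le_left _ _
    have h4 : ρ 0 / K ^ (p + 1) ≤ ρ (y - t) := by
      rw [div_le_iff₀ (by positivity)]; linarith
    have h5 : |f y - p| * ρ (y - t) ≤ 1 / 4 * ρ (y - t) := by linarith
    exact le_of_mul_le_mul_right h5 (hpos _)
  -- return times for different plateaus are far apart, since their plateaus cannot overlap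
  have hfar : ∀ p q t s, p ≠ q → t ∈ F p → s ∈ F q → (p : ℝ) + q + 2 < |s - t| := by
    intro p q t s hpq ht hs
    by_contra! hle
    have hD : (0 : ℝ) < (p : ℝ) + q + 2 := by positivity
    set r := (s - t) / ((p : ℝ) + q + 2) with hr
    have hr1 : |r| ≤ 1 := by rw [hr, abs_div, abs_of_pos hD, div_le_one hD]; exact hle
    have hst : s - t = r * ((p : ℝ) + q + 2) := by rw [hr]; field_simp
    have h1 := hval p t ht (t + r * (p + 1)) (by
      rw [add_sub_cancel_left, abs_mul, abs_of_pos (by positivity : (0 : ℝ) < (p : ℝ) + 1)]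
      exact mul_le_of_le_one_left (by positivity) hr1)
    have h2 := hval q s hs (t + r * (p + 1)) (by
      have : t + r * (p + 1) - s = -(r * (q + 1)) := by linarith
      rw [this, abs_neg, abs_mul, abs_of_pos (by positivity : (0 : ℝ) < (q : ℝ) + 1)]
      exact mul_le_of_le_one_left (by positivity) hr1)
    rw [abs_le] at h1 h2
    rcases Nat.lt_or_gt_of_ne hpq with h3 | h3
    · have : (p : ℝ) + 1 ≤ q := by exact_mod_cast h3
      linarith
    · have : (q : ℝ) + 1 ≤ p := by exact_mod_cast h3
      linarith
  set E : ℕ → Set ℕ := fun p =>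
    {n | greedy {n : ℕ | ∃ t ∈ F p, (n : ℝ) ≤ t ∧ t < n + 1} (2 * p + 10) n} with hE
  have hEF : ∀ p n, n ∈ E p → ∃ t ∈ F p, (n : ℝ) ≤ t ∧ t < n + 1 := fun p n hn => greedy_mem hn
  refine ⟨fun p => (p : ℝ) + 1, ⟨fun p => by positivity, ?_⟩, E, ?_, ?_, ?_, ?_⟩
  · exact tendsto_atTop_add_const_right _ _ tendsto_natCast_atTop_atTop
  · intro p _
    exact ldens_greedy_floor (hFd p) (by omega)
  · intro p q _ _ hpq n hn m hm j k hj hk hnm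
    obtain ⟨t, ht, ht1, ht2⟩ := hEF p n hn
    obtain ⟨s, hs, hs1, hs2⟩ := hEF q m hm
    have h1 := hfar p q t s hpq ht hs
    have hnm' : (n : ℝ) + j = m + k := by exact_mod_cast hnm
    have hj' : |(j : ℝ)| ≤ p := by exact_mod_cast hj
    have hk' : |(k : ℝ)| ≤ q := by exact_mod_cast hk
    rw [abs_le] at hj' hk'
    rcases lt_abs.1 h1 with h | h <;> linarith
  · intro p hp
    rw [Metric.tendsto_nhds]
    intro η hη
    rw [eventually_inf_principal]
    have hp1 : (1 : ℝ) ≤ p := by exact_mod_cast hp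
    have h1 := (Metric.tendsto_nhds.1 hftop) (η / (2 * K)) (by positivity)
    obtain ⟨a, ha⟩ := eventually_atTop.1 h1
    filter_upwards [tendsto_natCast_atTop_atTop.eventually (eventually_ge_atTop a)] with n hna hn
    obtain ⟨t, ht, ht1, ht2⟩ := hEF p n hn
    have h2 := ha t (hna.trans ht1)
    have h3 := hval p t ht t (by rw [sub_self, abs_zero]; positivity)
    rw [Real.dist_0_eq_abs] at h2 ⊢
    rw [abs_le] at h3
    have h4 : 1 / 2 * ρ t ≤ |f t * ρ t| := by
      refine le_trans ?_ (le_abs_self _)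
      exact mul_le_mul_of_nonneg_right (by linarith) (hpos _).le
    have h5 := hK1 n t (by rw [abs_le]; constructor <;> linarith)
    rw [abs_of_pos (hpos _)]
    have h6 : ρ t < η / K := by
      have : η / (2 * K) = 1 / 2 * (η / K) := by field_simp
      linarith
    calc ρ n ≤ K * ρ t := h5
      _ < K * (η / K) := mul_lt_mul_of_pos_left h6 hK0
      _ = η := by field_simp
  · intro p q hp hq n hn m hm hmn
    obtain ⟨t, ht, ht1, ht2⟩ := hEF p n hn
    obtain ⟨s, hs, hs1, hs2⟩ := hEF q m hm
    have hq1 : (1 : ℝ) ≤ q := by exact_mod_cast hq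
    have hst : (p : ℝ) + 2 ≤ |s - t| := by
      by_cases hpq : p = q
      · subst hpq
        rcases Nat.lt_or_gt_of_ne hmn with h | h
        · have := greedy_sep hn hm h
          have : (m : ℝ) + (2 * p + 10) ≤ n := by exact_mod_cast this
          exact le_trans (by linarith) (neg_le_abs _)
        · have := greedy_sep hm hn h
          have : (n : ℝ) + (2 * p + 10) ≤ m := by exact_mod_cast this
          exact le_trans (by linarith) (le_abs_self _)
      · have := hfar p q t s hpq ht hs
        linarith
    have h1 := ht.2 (s - t)
    rw [sub_add_cancel, plateau_eq_zero hst, sub_zero] at h1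
    have h2 := hval q s hs s (by rw [sub_self, abs_zero]; positivity)
    have h3 := hK1 (m - n) (s - t) (by rw [abs_le]; constructor <;> linarith)
    rw [abs_le] at h2
    have h4 : ((q : ℝ) + 1) / 4 * ρ (s - t) ≤ 1 / (4 * K * (p + 1)) := by
      refine le_trans ?_ (h1.trans (min_le_right _ _))
      refine mul_le_mul_of_nonneg_right (le_trans ?_ (le_abs_self _)) (hpos _).le
      linarith
    have h5 : ρ (s - t) ≤ 1 / (K * ((p + 1) * (q + 1))) := by
      rw [le_div_iff₀ (by positivity)] at h4 ⊢
      linarith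
    calc ρ (m - n) ≤ K * ρ (s - t) := h3
      _ ≤ K * (1 / (K * ((p + 1) * (q + 1)))) := mul_le_mul_of_nonneg_left h5 hK0.le
      _ = _ := by field_simp

/-! ### A dense sequence of compactly supported functions -/

/-- A countable family of compactly supported continuous functions, dense in `C₀^ρ`: the products
of a dense sequence of `C(ℝ, ℝ)` (for the compact-open topology) with trapezoidal cut-offs. -/
lemma exists_dense_family {ρ : ℝ → ℝ} (hpos : ∀ x, 0 < ρ x) {K : ℝ} (hK : 1 ≤ K)
    (hK1 : ∀ x y : ℝ, |x - y| ≤ 1 → ρ x ≤ K * ρ y) :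
    ∃ h : ℕ → ℕ → ℝ → ℝ, (∀ i j, Continuous (h i j)) ∧
      (∀ (i j : ℕ) (x : ℝ), (j : ℝ) + 1 ≤ |x| → h i j x = 0) ∧
      ∀ g, MemC0rho ρ g → ∀ ε : ℝ, 0 < ε → ∃ i j, ∀ x, |h i j x - g x| * ρ x ≤ ε := by
  have hKn := weight_comparable_nat hK hK1
  obtain ⟨d, hd⟩ := TopologicalSpace.exists_dense_seq C(ℝ, ℝ)
  set χ : ℕ → ℝ → ℝ := fun j x => max 0 (min 1 ((j : ℝ) + 1 - |x|)) with hχ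
  have hχ0 : ∀ j x, 0 ≤ χ j x := fun j x => le_max_left _ _
  have hχ1 : ∀ j x, χ j x ≤ 1 := fun j x => max_le zero_le_one (min_le_left _ _)
  have hχin : ∀ (j : ℕ) (x : ℝ), |x| ≤ j → χ j x = 1 := fun j x hx => by
    simp only [hχ]
    rw [min_eq_left (by linarith), max_eq_right zero_le_one]
  have hχout : ∀ (j : ℕ) x, (j : ℝ) + 1 ≤ |x| → χ j x = 0 := fun j x hx =>
    max_eq_left ((min_le_right _ _).trans (by linarith))
  refine ⟨fun i j x => χ j x * d i x, fun i j => ?_, fun i j x hx => ?_, ?_⟩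
  · have : Continuous (χ j) := by simp only [hχ]; fun_prop
    exact this.mul (d i).continuous
  · simp only [hχout j x hx, zero_mul]
  · rintro g ⟨hgc, hgt, hgb⟩ ε hε
    obtain ⟨a, ha⟩ := eventually_atTop.1 ((Metric.tendsto_nhds.1 hgt) (ε / 2) (by positivity))
    obtain ⟨b, hb⟩ := eventually_atBot.1 ((Metric.tendsto_nhds.1 hgb) (ε / 2) (by positivity))
    obtain ⟨j, hj⟩ := exists_nat_ge (max a (-b))
    set B := K ^ (j + 1) * ρ 0 with hB
    have hB0 : 0 < B := by have := hpos 0; positivity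
    have hout : ∀ x, (j : ℝ) < |x| → |g x| * ρ x ≤ ε / 2 := by
      intro x hx
      have : |g x| * ρ x = dist (g x * ρ x) 0 := by
        rw [Real.dist_0_eq_abs, abs_mul, abs_of_pos (hpos x)]
      rw [this]
      rcases lt_abs.1 hx with h | h
      · exact (ha x ((le_max_left _ _).trans (hj.trans h.le))).le
      · exact (hb x (by linarith [le_max_right a (-b)])).le
    have hopen := (ContinuousMap.tendsto_iff_forall_isCompact_tendstoUniformlyOn
      (F := fun e : C(ℝ, ℝ) => e) (p := nhds ⟨g, hgc⟩) (f := ⟨g, hgc⟩)).1 tendsto_id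
      (Set.Icc (-((j : ℝ) + 1)) (j + 1)) isCompact_Icc
    have hev := (Metric.tendstoUniformlyOn_iff.1 hopen) (ε / (2 * B)) (by positivity)
    obtain ⟨-, hi, ⟨i, rfl⟩⟩ := mem_closure_iff_nhds.1 (hd ⟨g, hgc⟩) _ hev
    refine ⟨i, j, fun x => ?_⟩
    rcases le_or_gt ((j : ℝ) + 1) |x| with hx | hx
    · simp only [hχout j x hx, zero_mul, zero_sub, abs_neg]
      exact (hout x (by linarith)).trans (by linarith)
    · have hx' : x ∈ Set.Icc (-((j : ℝ) + 1)) (j + 1) := abs_le.1 hx.le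
      have h1 : |g x - d i x| < ε / (2 * B) := hi x hx'
      have hρB : ρ x ≤ B := hKn (j + 1) x 0 (by rw [sub_zero]; push_cast; exact hx.le)
      have h2 : |d i x - g x| * ρ x ≤ ε / 2 := by
        rw [abs_sub_comm]
        calc |g x - d i x| * ρ x ≤ ε / (2 * B) * B :=
              mul_le_mul h1.le hρB (hpos _).le (by positivity)
          _ = ε / 2 := by field_simp
      have h3 : (1 - χ j x) * (|g x| * ρ x) ≤ ε / 2 := by
        rcases le_or_gt |x| (j : ℝ) with hxj | hxj
        · rw [hχin j x hxj, sub_self, zero_mul]; positivity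
        · have := hout x hxj
          have h0 : 0 ≤ |g x| * ρ x := mul_nonneg (abs_nonneg _) (hpos _).le
          exact (mul_le_of_le_one_left h0 (by linarith [hχ0 j x])).trans this
      have h4 : χ j x * d i x - g x = χ j x * (d i x - g x) - (1 - χ j x) * g x := by ring
      have h5 : |χ j x * d i x - g x| ≤ |d i x - g x| + (1 - χ j x) * |g x| := by
        rw [h4]
        refine (abs_sub _ _).trans (add_le_add ?_ ?_)
        · rw [abs_mul, abs_of_nonneg (hχ0 j x)]
          exact mul_le_of_le_one_left (abs_nonneg _) (hχ1 j x)
        · rw [abs_mul, abs_of_nonneg (by linarith [hχ1 j x])]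
      calc |χ j x * d i x - g x| * ρ x ≤ (|d i x - g x| + (1 - χ j x) * |g x|) * ρ x :=
            mul_le_mul_of_nonneg_right h5 (hpos _).le
        _ ≤ ε := by linarith

/-- A dense sequence in which every term recurs infinitely often and the `p`-th term, for
`p ≥ 1`, is supported in `[-p, p]`. -/
lemma exists_dense_seq_supported {ρ : ℝ → ℝ} (hpos : ∀ x, 0 < ρ x) {K : ℝ} (hK : 1 ≤ K)
    (hK1 : ∀ x y : ℝ, |x - y| ≤ 1 → ρ x ≤ K * ρ y) :
    ∃ G : ℕ → ℝ → ℝ, (∀ p, Continuous (G p)) ∧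
      (∀ (p : ℕ) (x : ℝ), 1 ≤ p → (p : ℝ) ≤ |x| → G p x = 0) ∧
      ∀ g, MemC0rho ρ g → ∀ ε : ℝ, 0 < ε → ∃ φ : ℝ → ℝ, Continuous φ ∧
        (∃ R : ℕ, ∀ x, (R : ℝ) ≤ |x| → φ x = 0) ∧ (∀ x, |φ x - g x| * ρ x ≤ ε) ∧
        ∀ P : ℕ, ∃ p, P ≤ p ∧ 1 ≤ p ∧ G p = φ := by
  obtain ⟨h, hc, hs, hd⟩ := exists_dense_family hpos hK hK1
  refine ⟨fun p => h (p - 1).unpair.2.unpair.1 (p - 1).unpair.2.unpair.2, fun p => hc _ _, ?_, ?_⟩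
  · intro p x hp hx
    refine hs _ _ _ (le_trans ?_ hx)
    have h1 : (p - 1).unpair.2.unpair.2 + 1 ≤ p := by
      have := (Nat.unpair_right_le (p - 1).unpair.2).trans (Nat.unpair_right_le (p - 1))
      omega
    exact_mod_cast h1
  · intro g hg ε hε
    obtain ⟨i, j, hij⟩ := hd g hg ε hε
    refine ⟨h i j, hc i j, ⟨j + 1, fun x hx => hs i j x (by exact_mod_cast hx)⟩, hij, fun P => ?_⟩
    refine ⟨Nat.pair P (Nat.pair i j) + 1, ?_, by omega, by simp⟩
    exact (Nat.left_le_pair _ _).trans (Nat.le_succ _)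

lemma exists_bound_of_bounded_support {φ : ℝ → ℝ} (hφ : Continuous φ) {R : ℝ}
    (h : ∀ x, R ≤ |x| → φ x = 0) : ∃ B : ℝ, 1 ≤ B ∧ ∀ x, |φ x| ≤ B := by
  obtain ⟨C, hC⟩ := isCompact_Icc.exists_bound_of_continuousOn (s := Set.Icc (-R) R)
    hφ.continuousOn
  refine ⟨max C 1, le_max_right _ _, fun x => ?_⟩
  rcases le_or_gt R |x| with hx | hx
  · rw [h x hx, abs_zero]; exact le_trans zero_le_one (le_max_right _ _)
  · exact (hC x (abs_le.1 hx.le)).trans (le_max_left _ _)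

/-- Small translations move a compactly supported continuous function only little in `C₀^ρ`. -/
lemma exists_translation_close {ρ : ℝ → ℝ} (hpos : ∀ x, 0 < ρ x) {K : ℝ} (hK : 1 ≤ K)
    (hK1 : ∀ x y : ℝ, |x - y| ≤ 1 → ρ x ≤ K * ρ y) {φ : ℝ → ℝ} (hφ : Continuous φ) {R : ℕ}
    (h : ∀ x, (R : ℝ) ≤ |x| → φ x = 0) {ε : ℝ} (hε : 0 < ε) :
    ∃ δ : ℝ, 0 < δ ∧ δ ≤ 1 ∧ ∀ s, 0 ≤ s → s ≤ δ → ∀ x, |φ (x + s) - φ x| * ρ x ≤ ε := by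
  have hKn := weight_comparable_nat hK hK1
  have huc : UniformContinuous φ := by
    refine hφ.uniformContinuous_of_tendsto_cocompact (x := 0) ?_
    refine (tendsto_const_nhds (x := (0 : ℝ))).congr' ?_
    filter_upwards [(tendsto_norm_cocompact_atTop (E := ℝ)).eventually (eventually_ge_atTop (R : ℝ))]
      with x hx
    exact (h x hx).symm
  set B := K ^ (R + 1) * ρ 0 with hB
  have hB0 : 0 < B := by have := hpos 0; positivity
  obtain ⟨δ, hδ, hδφ⟩ := Metric.uniformContinuous_iff.1 huc (ε / B) (by positivity)
  refine ⟨min (δ / 2) 1, by positivity, min_le_right _ _, fun s hs0 hs x => ?_⟩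
  have hs1 : s ≤ 1 := hs.trans (min_le_right _ _)
  have hs2 : s ≤ δ / 2 := hs.trans (min_le_left _ _)
  rcases le_or_gt ((R : ℝ) + 1) |x| with hx | hx
  · have h1 : (R : ℝ) ≤ |x + s| := by
      have := abs_sub_abs_le_abs_sub x (x + s)
      rw [sub_add_cancel_left, abs_neg, abs_of_nonneg hs0] at this
      linarith
    rw [h _ h1, h x (by linarith), sub_zero, abs_zero, zero_mul]
    exact hε.le
  · have h1 : |φ (x + s) - φ x| < ε / B := hδφ (by
      rw [Real.dist_eq, add_sub_cancel_left, abs_of_nonneg hs0]; linarith)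
    have hρB : ρ x ≤ B := hKn (R + 1) x 0 (by rw [sub_zero]; push_cast; exact hx.le)
    calc |φ (x + s) - φ x| * ρ x ≤ ε / B * B := mul_le_mul h1.le hρB (hpos _).le (by positivity)
      _ = ε := by field_simp

/-! ### The combinatorial condition implies frequent hypercyclicity -/

/-- Passing to a subsequence of `(E p)` makes the bounds in the combinatorial condition as small
as desired. -/
lemma cond_of_cond {ρ : ℝ → ℝ} {M : ℕ → ℝ} (hM : GoodM M) {E : ℕ → Set ℕ} (hE : Cond4 ρ M E)
    {M' : ℕ → ℝ} (hM' : GoodM M') : ∃ E' : ℕ → Set ℕ, Cond4 ρ M' E' := by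
  obtain ⟨ha, hb, hc, hd⟩ := hE
  have hfreq : ∀ p N : ℕ, ∃ k > N, M' p ≤ M k := fun p N => by
    have := ((hM.2.eventually (eventually_ge_atTop (M' p))).and (eventually_gt_atTop N)).exists
    obtain ⟨k, h1, h2⟩ := this
    exact ⟨k, h2, h1⟩
  obtain ⟨φ, hφ, hφM⟩ := extraction_forall_of_frequently (P := fun p k => M' p ≤ M k)
    (fun p => frequently_atTop'.2 (hfreq p))
  have hle : ∀ p, p ≤ φ p := hφ.id_le
  refine ⟨fun p => E (φ p), fun p hp => ha _ (hp.trans (hle p)), ?_, ?_, ?_⟩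
  · intro p q hp hq hpq n hn m hm j k hj hk
    have h1 : (p : ℤ) ≤ φ p := by exact_mod_cast hle p
    have h2 : (q : ℤ) ≤ φ q := by exact_mod_cast hle q
    exact hb _ _ (hp.trans (hle p)) (hq.trans (hle q)) (hφ.injective.ne hpq) n hn m hm j k
      (hj.trans h1) (hk.trans h2)
  · exact fun p hp => hc _ (hp.trans (hle p))
  · intro p q hp hq n hn m hm hmn
    refine (hd _ _ (hp.trans (hle p)) (hq.trans (hle q)) n hn m hm hmn).trans ?_
    exact one_div_le_one_div_of_le (mul_pos (hM'.1 p) (hM'.1 q))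
      (mul_le_mul (hφM p) (hφM q) (hM'.1 q).le (hM.1 _).le)

/-- Gluing the translates `G p (· - n)`, `n ∈ E p`, when the intervals `[n - p, n + p]` are at
distance at least `1` from each other. -/
lemma exists_glue {E : ℕ → Set ℕ} {G : ℕ → ℝ → ℝ} (hG : ∀ p, Continuous (G p))
    (hG0 : ∀ (p : ℕ) (x : ℝ), 1 ≤ p → (p : ℝ) ≤ |x| → G p x = 0)
    (hsep : ∀ p q n m : ℕ, 1 ≤ p → 1 ≤ q → n ∈ E p → m ∈ E q → (p, n) ≠ (q, m) →
      (p : ℝ) + q + 1 ≤ |(n : ℝ) - m|) :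
    ∃ f : ℝ → ℝ, Continuous f ∧
      (∀ (p n : ℕ) (x : ℝ), 1 ≤ p → n ∈ E p → |x - n| ≤ p → f x = G p (x - n)) ∧
      ∀ x : ℝ, f x ≠ 0 → ∃ p n : ℕ, 1 ≤ p ∧ n ∈ E p ∧ |x - n| ≤ p := by
  set ι := {i : ℕ × ℕ // 1 ≤ i.1 ∧ i.2 ∈ E i.1} with hι
  set T : ι → ℝ → ℝ := fun i x => G i.1.1 (x - i.1.2) with hT
  have hsupp : ∀ (i : ι) (x : ℝ), T i x ≠ 0 → |x - i.1.2| < i.1.1 := fun i x hx => by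
    by_contra! h
    exact hx (hG0 _ _ i.2.1 h)
  -- points of the supports of two distinct pieces are at distance at least `1`
  have huniq : ∀ (i j : ι) (x y : ℝ), |x - i.1.2| ≤ i.1.1 → |y - j.1.2| ≤ j.1.1 →
      |x - y| < 1 → i = j := by
    intro i j x y hx hy hxy
    by_contra hne
    have h := hsep i.1.1 j.1.1 i.1.2 j.1.2 i.2.1 j.2.1 i.2.2 j.2.2 (fun h => hne (Subtype.ext h))
    rw [abs_le] at hx hy
    rw [abs_lt] at hxy
    rcases le_abs.1 h with h | h <;> linarith
  refine ⟨fun x => ∑ᶠ i : ι, T i x, ?_, ?_, ?_⟩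
  · refine continuous_finsum (fun i => (hG _).comp (by fun_prop)) fun x => ?_
    refine ⟨Metric.ball x (1 / 2), Metric.ball_mem_nhds x (by norm_num), ?_⟩
    refine Set.Subsingleton.finite ?_
    rintro i ⟨y, hy1, hy2⟩ j ⟨z, hz1, hz2⟩
    refine huniq i j y z (hsupp i y hy1).le (hsupp j z hz1).le ?_
    have := dist_triangle_right y z x
    rw [Metric.mem_ball] at hy2 hz2
    rw [← Real.dist_eq]
    linarith
  · intro p n x hp hn hx
    refine finsum_eq_single (fun i : ι => T i x) ⟨(p, n), hp, hn⟩ fun i hi => ?_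
    by_contra h
    exact hi (huniq i ⟨(p, n), hp, hn⟩ x x (hsupp i x h).le hx (by simp))
  · intro x hx
    obtain ⟨i, hi⟩ : ∃ i : ι, T i x ≠ 0 := by
      by_contra! h
      exact hx (finsum_eq_zero_of_forall_eq_zero h)
    exact ⟨i.1.1, i.1.2, i.2.1, i.2.2, (hsupp i x hi).le⟩

/-- The combinatorial condition for a rapidly growing `M` yields a frequently hypercyclic function,
obtained by placing the `p`-th term of a dense sequence around every element of `E p`. -/
lemma FH_of_cond {ρ : ℝ → ℝ} (hpos : ∀ x, 0 < ρ x) {K : ℝ} (hK : 1 ≤ K)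
    (hK1 : ∀ x y : ℝ, |x - y| ≤ 1 → ρ x ≤ K * ρ y)
    (hall : ∀ M : ℕ → ℝ, GoodM M → ∃ E : ℕ → Set ℕ, Cond4 ρ M E) : FHTransC0 ρ := by
  have hKn := weight_comparable_nat hK hK1
  have hK0 : 0 < K := by linarith
  obtain ⟨G, hGc, hG0, hGd⟩ := exists_dense_seq_supported hpos hK hK1
  have hGb : ∀ p, ∃ B : ℝ, 1 ≤ B ∧ (1 ≤ p → ∀ x, |G p x| ≤ B) := fun p => by
    by_cases hp : 1 ≤ p
    · obtain ⟨B, h1, h2⟩ := exists_bound_of_bounded_support (hGc p) (fun x => hG0 p x hp)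
      exact ⟨B, h1, fun _ => h2⟩
    · exact ⟨1, le_rfl, fun h => absurd h hp⟩
  choose B hB1 hB using hGb
  set r := 1 + 1 / ρ 0 with hr
  have hr1 : 1 ≤ r := by have := hpos 0; rw [hr]; linarith [one_div_pos.2 this]
  have hρr : 1 < ρ 0 * r := by
    have := hpos 0
    rw [hr, mul_add, mul_one, mul_one_div_cancel this.ne']; linarith
  -- the factor `B p * K ^ p` controls the `p`-th piece, `r` forces separation inside `E p`
  set M : ℕ → ℝ := fun p => ((p : ℝ) + 1) * r * (B p * K ^ p) with hM
  have hBK : ∀ p, 1 ≤ B p * K ^ p := fun p =>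
    one_le_mul_of_one_le_of_one_le (hB1 p) (one_le_pow₀ hK)
  have hMp : ∀ p : ℕ, (p : ℝ) + 1 ≤ M p := fun p => by
    have h1 : (p : ℝ) + 1 ≤ (p + 1) * r := le_mul_of_one_le_right (by positivity) hr1
    exact h1.trans (le_mul_of_one_le_right (by positivity) (hBK p))
  have hMBK : ∀ p : ℕ, ((p : ℝ) + 1) * (B p * K ^ p) ≤ M p := fun p => by
    have := hBK p
    exact mul_le_mul_of_nonneg_right (le_mul_of_one_le_right (by positivity) hr1) (by linarith)
  have hMpos : ∀ p, 0 < M p := fun p => lt_of_lt_of_le (by positivity) (hMp p)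
  have hMgood : GoodM M := ⟨hMpos, tendsto_atTop_mono hMp
    (tendsto_atTop_add_const_right _ _ tendsto_natCast_atTop_atTop)⟩
  obtain ⟨E, ha, hb, hc, hd⟩ := hall M hMgood
  have hsep : ∀ p q n m : ℕ, 1 ≤ p → 1 ≤ q → n ∈ E p → m ∈ E q → (p, n) ≠ (q, m) →
      (p : ℝ) + q + 1 ≤ |(n : ℝ) - m| := by
    intro p q n m hp hq hn hm hne
    have hgap : (p : ℤ) + q < |(n : ℤ) - m| := by
      by_contra! hle
      by_cases hpq : p = q
      · subst hpq
        have hmn : m ≠ n := fun h => hne (by rw [h])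
        have h1 := hd p p hp hp n hn m hm hmn
        have h2 : ρ 0 ≤ K ^ (p + p) * ρ ((m : ℝ) - n) := hKn _ _ _ (by
          rw [zero_sub, neg_sub]; exact_mod_cast hle)
        have h3 : r * K ^ p ≤ M p := by
          have : 1 * r * (1 * K ^ p) ≤ M p := by
            simp only [hM]
            have := hB1 p
            gcongr
            linarith [Nat.cast_nonneg (α := ℝ) p]
          simpa using this
        have h4 : (r * K ^ p) * (r * K ^ p) ≤ M p * M p :=
          mul_self_le_mul_self (by positivity) h3
        rw [le_div_iff₀ (mul_pos (hMpos p) (hMpos p))] at h1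
        have h5 : ρ ((m : ℝ) - n) * ((r * K ^ p) * (r * K ^ p)) ≤ 1 :=
          (mul_le_mul_of_nonneg_left h4 (hpos _).le).trans h1
        have h6 : ρ 0 * (r * r) ≤ 1 := by
          calc ρ 0 * (r * r) ≤ K ^ (p + p) * ρ ((m : ℝ) - n) * (r * r) :=
                mul_le_mul_of_nonneg_right h2 (by positivity)
            _ = ρ ((m : ℝ) - n) * ((r * K ^ p) * (r * K ^ p)) := by ring
            _ ≤ 1 := h5
        nlinarith
      · have hclamp : ∃ j k : ℤ, |j| ≤ (p : ℤ) ∧ |k| ≤ (q : ℤ) ∧ (n : ℤ) + j = m + k := by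
          rw [abs_le] at hle
          refine ⟨max (-(p : ℤ)) (min (p : ℤ) (m - n)), n + max (-(p : ℤ)) (min (p : ℤ) (m - n)) - m,
            ?_, ?_, by ring⟩ <;> rw [abs_le] <;> constructor <;> omega
        obtain ⟨j, k, hj, hk, hjk⟩ := hclamp
        exact hb p q hp hq hpq n hn m hm j k hj hk hjk
    have : (p : ℤ) + q + 1 ≤ |(n : ℤ) - m| := hgap
    exact_mod_cast this
  obtain ⟨f, hfc, hfeq, hf0⟩ := exists_glue hGc hG0 hsep
  have hE1 : (E 1).Nonempty := by
    by_contra h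
    have h1 := ha 1 le_rfl
    rw [Set.not_nonempty_iff_eq_empty.1 h] at h1
    simp [ldens] at h1
  obtain ⟨n₁, hn₁⟩ := hE1
  -- on the piece around `n ∈ E p` translated by `c`, the weight is comparable to its centre value
  have hpiece : ∀ (p n : ℕ) (x c : ℝ), 1 ≤ p → n ∈ E p → |x - n| ≤ p →
      |f x| * ρ (x - c) ≤ B p * K ^ p * ρ (n - c) := by
    intro p n x c hp hn hx
    rw [hfeq p n x hp hn hx, mul_assoc]
    exact mul_le_mul (hB p hp _) (hKn p _ _ (by rwa [sub_sub_sub_cancel_right])) (hpos _).le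
      (by linarith [hB1 p])
  refine ⟨f, ⟨hfc, ?_, ?_⟩, ?_⟩
  · rw [Metric.tendsto_nhds]
    intro ε hε
    obtain ⟨P, hP⟩ := exists_nat_ge (K ^ n₁ / ε)
    have hcev : ∀ p : ℕ, 1 ≤ p → ∀ᶠ n : ℕ in atTop, n ∈ E p → B p * K ^ p * ρ n < ε := by
      intro p hp
      have h1 := (hc p hp).const_mul (B p * K ^ p)
      rw [mul_zero] at h1
      exact eventually_inf_principal.1 (h1.eventually (eventually_lt_nhds hε))
    have hcev' : ∀ᶠ n : ℕ in atTop, ∀ p ∈ Finset.Icc 1 (P + 1),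
        n ∈ E p → B p * K ^ p * ρ n < ε :=
      (Finset.eventually_all _).2 fun p hp => hcev p (Finset.mem_Icc.1 hp).1
    obtain ⟨N, hN⟩ := eventually_atTop.1 hcev'
    filter_upwards [eventually_ge_atTop ((N : ℝ) + (P + 1))] with x hx
    rw [Real.dist_0_eq_abs, abs_mul, abs_of_pos (hpos x)]
    by_cases hfx : f x = 0
    · rw [hfx, abs_zero, zero_mul]; exact hε
    obtain ⟨p, n, hp, hn, hxn⟩ := hf0 x hfx
    have h1 := hpiece p n x 0 hp hn hxn
    rw [sub_zero, sub_zero] at h1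
    refine h1.trans_lt ?_
    rcases le_or_gt p (P + 1) with hpP | hpP
    · refine hN n ?_ p (Finset.mem_Icc.2 ⟨hp, hpP⟩) hn
      have h2 : (p : ℝ) ≤ P + 1 := by exact_mod_cast hpP
      rw [abs_le] at hxn
      have : (N : ℝ) ≤ n := by linarith
      exact_mod_cast this
    -- pieces with large `p` are controlled by comparison with the fixed element of `E 1`
    · have hne : n ≠ n₁ := fun h => by
        have h2 := hsep p 1 n n₁ hp le_rfl hn hn₁ (fun h' => by
          have := congrArg Prod.fst h'
          simp only at this
          omega)
        rw [h, sub_self, abs_zero] at h2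
        linarith [Nat.cast_nonneg (α := ℝ) p, Nat.cast_nonneg (α := ℝ) 1]
      have h2 := hd 1 p le_rfl hp n₁ hn₁ n hn hne
      have h3 : ρ n ≤ K ^ n₁ * ρ ((n : ℝ) - n₁) := hKn _ _ _ (by
        rw [sub_sub_cancel, Nat.abs_cast])
      have h4 : 1 ≤ M 1 := le_trans (by linarith [Nat.cast_nonneg (α := ℝ) 1]) (hMp 1)
      have h5 : ρ ((n : ℝ) - n₁) * (((p : ℝ) + 1) * (B p * K ^ p)) ≤ 1 := by
        rw [le_div_iff₀ (mul_pos (hMpos _) (hMpos _))] at h2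
        refine (mul_le_mul_of_nonneg_left ((hMBK p).trans ?_) (hpos _).le).trans h2
        exact le_mul_of_one_le_left (hMpos p).le h4
      have h6 : B p * K ^ p * ρ n * (p + 1) ≤ K ^ n₁ := by
        have hBK0 : 0 ≤ B p * K ^ p := by linarith [hBK p]
        calc B p * K ^ p * ρ n * (p + 1)
            ≤ B p * K ^ p * (K ^ n₁ * ρ ((n : ℝ) - n₁)) * (p + 1) := by gcongr
          _ = K ^ n₁ * (ρ ((n : ℝ) - n₁) * (((p : ℝ) + 1) * (B p * K ^ p))) := by ring
          _ ≤ K ^ n₁ * 1 := by gcongr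
          _ = K ^ n₁ := mul_one _
      have h7 : K ^ n₁ ≤ P * ε := (div_le_iff₀ hε).1 hP
      have h8 : (P : ℝ) + 1 + 1 ≤ p := by exact_mod_cast hpP
      have h9 : B p * K ^ p * ρ n * (p + 1) < ε * (p + 1) := by nlinarith
      exact lt_of_mul_lt_mul_right h9 (by positivity)
  · refine tendsto_const_nhds.congr' ?_
    filter_upwards [eventually_lt_atBot (-(n₁ : ℝ) - 1)] with x hx
    have : f x = 0 := by
      by_contra hfx
      obtain ⟨p, n, hp, hn, hxn⟩ := hf0 x hfx
      have hp1 : (1 : ℝ) ≤ p := by exact_mod_cast hp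
      rw [abs_le] at hxn
      have hn0 : (0 : ℝ) ≤ n := Nat.cast_nonneg n
      have hn10 : (0 : ℝ) ≤ n₁ := Nat.cast_nonneg n₁
      by_cases hpn : (p, n) = (1, n₁)
      · obtain ⟨rfl, rfl⟩ := Prod.mk.inj hpn
        push_cast at hxn
        linarith
      · have h2 := hsep p 1 n n₁ hp le_rfl hn hn₁ hpn
        push_cast at h2
        rcases le_abs.1 h2 with h | h <;> linarith
    rw [this, zero_mul]
  · intro g hg ε hε
    obtain ⟨φ, hφc, ⟨R, hφR⟩, hφg, hφG⟩ := hGd g hg (ε / 3) (by positivity)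
    obtain ⟨P, hP⟩ := exists_nat_ge (3 * K / ε)
    obtain ⟨p, hPp, hp, rfl⟩ := hφG P
    obtain ⟨δ, hδ0, hδ1, hδ⟩ := exists_translation_close hpos hK hK1 hφc hφR
      (ε := ε / 3) (by positivity)
    refine ldensR_pos_of_ldens (ha p hp) hδ0 hδ1 fun m hm s hs0 hs => ⟨by positivity, fun x => ?_⟩
    -- at integer times `m ∈ E p` the translate of `f` is within `1 / M p` of `G p`
    have happrox : ∀ y : ℝ, |f (y + m) - G p y| * ρ y ≤ 1 / M p := by
      intro y
      have hMp0 := hMpos p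
      rcases le_or_gt |y| (p : ℝ) with hy | hy
      · rw [hfeq p m (y + m) hp hm (by rwa [add_sub_cancel_right]), add_sub_cancel_right, sub_self,
          abs_zero, zero_mul]
        positivity
      · rw [hG0 p y hp hy.le, sub_zero]
        by_cases hfy : f (y + m) = 0
        · rw [hfy, abs_zero, zero_mul]; positivity
        obtain ⟨q, n, hq, hn, hyn⟩ := hf0 _ hfy
        have hnm : n ≠ m := by
          rintro rfl
          by_cases hpq : p = q
          · subst hpq
            rw [add_sub_cancel_right] at hyn
            linarith
          · have h2 := hsep p q n n hp hq hm hn (fun h => hpq (Prod.mk.inj h).1)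
            rw [sub_self, abs_zero] at h2
            linarith [Nat.cast_nonneg (α := ℝ) p, Nat.cast_nonneg (α := ℝ) q]
        have h1 := hpiece q n (y + m) m hq hn hyn
        rw [add_sub_cancel_right] at h1
        have h2 := hd p q hp hq m hm n hn hnm
        have h3 : B q * K ^ q ≤ M q := by
          refine le_trans (le_mul_of_one_le_left (by linarith [hBK q]) ?_) (hMBK q)
          linarith [Nat.cast_nonneg (α := ℝ) q]
        calc |f (y + m)| * ρ y ≤ B q * K ^ q * ρ (n - m) := h1
          _ ≤ M q * (1 / (M p * M q)) := mul_le_mul h3 h2 (hpos _).le (hMpos q).le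
          _ = 1 / M p := by have := (hMpos q).ne'; field_simp
    have h1 : |f (x + s + m) - G p (x + s)| * ρ x ≤ ε / 3 := by
      have hρ : ρ x ≤ K * ρ (x + s) := hK1 _ _ (by
        rw [sub_add_cancel_left, abs_neg, abs_of_nonneg hs0]; linarith)
      have hPp' : (P : ℝ) ≤ p := by exact_mod_cast hPp
      calc |f (x + s + m) - G p (x + s)| * ρ x
          ≤ |f (x + s + m) - G p (x + s)| * (K * ρ (x + s)) :=
            mul_le_mul_of_nonneg_left hρ (abs_nonneg _)
        _ = K * (|f (x + s + m) - G p (x + s)| * ρ (x + s)) := by ring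
        _ ≤ K * (1 / M p) := mul_le_mul_of_nonneg_left (happrox _) hK0.le
        _ = K / M p := mul_one_div _ _
        _ ≤ ε / 3 := by
          rw [div_le_iff₀ (hMpos p)]
          have h2 : 3 * K ≤ P * ε := (div_le_iff₀ hε).1 hP
          have h3 : (P : ℝ) * ε ≤ M p * ε :=
            mul_le_mul_of_nonneg_right (by linarith [hMp p]) hε.le
          linarith
    have h2 := hδ s hs0 hs x
    have h3 := hφg x
    have h4 : |f (x + (m + s)) - g x| ≤ |f (x + s + m) - G p (x + s)| +
        |G p (x + s) - G p x| + |G p x - g x| := by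
      rw [show x + ((m : ℝ) + s) = x + s + m by ring]
      have e1 := abs_sub_le (f (x + s + m)) (G p (x + s)) (g x)
      have e2 := abs_sub_le (G p (x + s)) (G p x) (g x)
      linarith
    have h5 := mul_le_mul_of_nonneg_right h4 (hpos x).le
    linarith

/-- For `ρ` admissible on ℝ with `sup_{k∈ℤ} ρ(k+1)/ρ(k) < ∞`, the translation
semigroup is frequently hypercyclic on `C₀^ρ(ℝ)` iff there exist a sequence `(M(p))`
of positive reals tending to `∞` and sets `E_p ⊆ ℕ` satisfying (a)–(d); moreover this holds
for some such `(M(p))` iff for every such `(M(p))` a suitable `(E_p)` exists. -/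
theorem translation_freqHypercyclic_iff_C0
    (ρ : ℝ → ℝ) (hρ : Admissible ρ)
    (hsup : ∃ C : ℝ, ∀ k : ℤ, ρ ((k : ℝ) + 1) / ρ (k : ℝ) ≤ C) :
    (FHTransC0 ρ ↔ ∃ M : ℕ → ℝ, GoodM M ∧ ∃ E : ℕ → Set ℕ, Cond4 ρ M E) ∧
    ((∃ M : ℕ → ℝ, GoodM M ∧ ∃ E : ℕ → Set ℕ, Cond4 ρ M E) ↔
      ∀ M : ℕ → ℝ, GoodM M → ∃ E : ℕ → Set ℕ, Cond4 ρ M E) := by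
  obtain ⟨K, hK, hK1⟩ := weight_comparable hρ hsup
  have hpos := hρ.2.1
  have hall : (∃ M : ℕ → ℝ, GoodM M ∧ ∃ E : ℕ → Set ℕ, Cond4 ρ M E) →
      ∀ M : ℕ → ℝ, GoodM M → ∃ E : ℕ → Set ℕ, Cond4 ρ M E := by
    rintro ⟨M, hM, E, hE⟩ M' hM'
    exact cond_of_cond hM hE hM'
  refine ⟨⟨cond_of_FH hpos hK hK1, fun h => FH_of_cond hpos hK hK1 (hall h)⟩, hall, fun h => ?_⟩
  have hM : GoodM fun p : ℕ => (p : ℝ) + 1 :=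
    ⟨fun p => by positivity, tendsto_atTop_add_const_right _ _ tendsto_natCast_atTop_atTop⟩
  exact ⟨_, hM, h _ hM⟩
end
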